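/- Every flow-admissible 3-edge-colorable cubic signed graph (G,σ) has a sign-circuit cover of length at most (20/9)|E(G)|. -/

import Mathlib

open SimpleGraph

variable {V : Type*}

/-- `σ e = true` means the edge `e` is negative. Number of negative edges in `E`. -/
noncomputable def negCount (σ : Sym2 V → Bool) (E : Set (Sym2 V)) : ℕ :=
  (E ∩ {e | σ e = true}).ncard

/-- Number of negative edges in a list of edges (with multiplicity). -/
def listNegCount (σ : Sym2 V → Bool) (l : List (Sym2 V)) : ℕ :=
  (l.filter fun e => σ e).length

/-- A circuit: a connected `2`-regular subgraph. -/
def IsCircuit (G : SimpleGraph V) (C : G.Subgraph) : Prop :=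
  C.Connected ∧ ∀ v ∈ C.verts, (C.neighborSet v).ncard = 2

/-- A balanced circuit: even number of negative edges. -/
def IsBalancedCircuit (G : SimpleGraph V) (σ : Sym2 V → Bool) (C : G.Subgraph) : Prop :=
  IsCircuit G C ∧ Even (negCount σ C.edgeSet)

/-- An unbalanced circuit: odd number of negative edges. -/
def IsUnbalancedCircuit (G : SimpleGraph V) (σ : Sym2 V → Bool) (C : G.Subgraph) : Prop :=
  IsCircuit G C ∧ Odd (negCount σ C.edgeSet)

/-- `P` is the subgraph of a (possibly trivial) path from `u` to `v`. -/
def IsPathSubgraph (G : SimpleGraph V) (P : G.Subgraph) (u v : V) : Prop :=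
  ∃ w : G.Walk u v, w.IsPath ∧ P.verts = {x | x ∈ w.support} ∧
    P.edgeSet = {e | e ∈ w.edges}

/-- A barbell: two unbalanced circuits joined by a (possibly trivial) path
meeting the circuits only at its ends. -/
def IsBarbell (G : SimpleGraph V) (σ : Sym2 V → Bool) (H : G.Subgraph) : Prop :=
  ∃ (C₁ C₂ P : G.Subgraph) (u v : V),
    IsUnbalancedCircuit G σ C₁ ∧ IsUnbalancedCircuit G σ C₂ ∧
    IsPathSubgraph G P u v ∧ u ∈ C₁.verts ∧ v ∈ C₂.verts ∧
    P.verts ∩ C₁.verts = {u} ∧ P.verts ∩ C₂.verts = {v} ∧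
    C₁.verts ∩ C₂.verts ⊆ {u} ∩ {v} ∧
    C₁.edgeSet ∩ C₂.edgeSet = ∅ ∧
    H = C₁ ⊔ C₂ ⊔ P

/-- A sign-circuit: a balanced circuit or a barbell. -/
def IsSignCircuit (G : SimpleGraph V) (σ : Sym2 V → Bool) (H : G.Subgraph) : Prop :=
  IsBalancedCircuit G σ H ∨ IsBarbell G σ H

/-- Flow-admissible: every edge lies in a sign-circuit (equivalently, the signed
graph admits a nowhere-zero integer flow). -/
def FlowAdmissible (G : SimpleGraph V) (σ : Sym2 V → Bool) : Prop :=
  ∀ e ∈ G.edgeSet, ∃ H : G.Subgraph, IsSignCircuit G σ H ∧ e ∈ H.edgeSet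

/-- Total length of a family of subgraphs. -/
noncomputable def coverLength (G : SimpleGraph V) (𝓕 : Multiset G.Subgraph) : ℕ :=
  (𝓕.map fun H => H.edgeSet.ncard).sum

/-- The family `𝓕` covers the edge set `E`. -/
def Covers (G : SimpleGraph V) (𝓕 : Multiset G.Subgraph) (E : Set (Sym2 V)) : Prop :=
  ∀ e ∈ E, ∃ H ∈ 𝓕, e ∈ H.edgeSet

/-- Cubic graph: every vertex has degree `3`. -/
def IsCubic (G : SimpleGraph V) : Prop := ∀ v : V, (G.neighborSet v).ncard = 3

/-- `2`-edge-connected: connected and bridgeless. -/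
def TwoEdgeConnected (G : SimpleGraph V) : Prop :=
  G.Connected ∧ ∀ e, ¬ G.IsBridge e

/-- Balanced signed graph: every circuit has an even number of negative edges. -/
def IsBalancedGraph (G : SimpleGraph V) (σ : Sym2 V → Bool) : Prop :=
  ∀ C : G.Subgraph, IsCircuit G C → Even (negCount σ C.edgeSet)

/-- A `2`-factor: a spanning `2`-regular subgraph. -/
def IsTwoFactor (G : SimpleGraph V) (F : G.Subgraph) : Prop :=
  F.IsSpanning ∧ ∀ v : V, (F.neighborSet v).ncard = 2

/-- A proper 3-edge-coloring: edges sharing a vertex get different colors. -/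
def Proper3EdgeColoring (G : SimpleGraph V) (c : Sym2 V → Fin 3) : Prop :=
  ∀ e ∈ G.edgeSet, ∀ f ∈ G.edgeSet, e ≠ f → (∃ x, x ∈ e ∧ x ∈ f) → c e ≠ c f

/-- 3-edge-colorable graph. -/
def ThreeEdgeColorable (G : SimpleGraph V) : Prop :=
  ∃ c : Sym2 V → Fin 3, Proper3EdgeColoring G c

/-- `S` is a segment of the circuit `C` determined by a set `Mv` of vertices
(the vertex set of a component `M`): a maximal subpath of `C` whose endpoints
are attachments of `M` and whose internal vertices are not in `M`. -/
def IsSegment (G : SimpleGraph V) (C : G.Subgraph) (Mv : Set V) (S : G.Subgraph) : Prop :=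
  ∃ (a b : V) (w : G.Walk a b),
    w.edges ≠ [] ∧ w.support.tail.Nodup ∧
    (∀ e ∈ w.edges, e ∈ C.edgeSet) ∧
    a ∈ Mv ∧ b ∈ Mv ∧
    (∀ x ∈ w.support, x ∈ Mv → x = a ∨ x = b) ∧
    S.verts = {x | x ∈ w.support} ∧ S.edgeSet = {e | e ∈ w.edges}

section SignedWalks

variable {V : Type*} {G : SimpleGraph V} {σ : Sym2 V → Bool}

/-- The sign of an edge, as an element of `ZMod 2`. -/
def edgeSign (σ : Sym2 V → Bool) (e : Sym2 V) : ZMod 2 := if σ e then 1 else 0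

/-- The total sign of a walk. -/
def walkSign (σ : Sym2 V → Bool) {u v : V} (p : G.Walk u v) : ZMod 2 :=
  (p.edges.map (edgeSign σ)).sum

@[simp] lemma walkSign_nil (u : V) : walkSign σ (Walk.nil : G.Walk u u) = 0 := by
  simp [walkSign]

@[simp] lemma walkSign_cons {u v w : V} (h : G.Adj u v) (p : G.Walk v w) :
    walkSign σ (Walk.cons h p) = edgeSign σ s(u, v) + walkSign σ p := by
  simp [walkSign]

@[simp] lemma walkSign_append {u v w : V} (p : G.Walk u v) (q : G.Walk v w) :
    walkSign σ (p.append q) = walkSign σ p + walkSign σ q := by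
  simp [walkSign]

@[simp] lemma walkSign_reverse {u v : V} (p : G.Walk u v) :
    walkSign σ p.reverse = walkSign σ p := by
  simp [walkSign, List.sum_reverse]

lemma zmod_two_eq_zero_or_one (x : ZMod 2) : x = 0 ∨ x = 1 := by
  revert x; decide

lemma sum_map_edgeSign (l : List (Sym2 V)) :
    (l.map (edgeSign σ)).sum = ((l.filter fun e => σ e).length : ZMod 2) := by
  induction l with
  | nil => simp
  | cons a l ih =>
    by_cases h : σ a = true <;> simp [edgeSign, h, ih, add_comm]

lemma negCount_list {l : List (Sym2 V)} (hl : l.Nodup) :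
    negCount σ {e | e ∈ l} = (l.filter fun e => σ e).length := by
  classical
  have : ({e | e ∈ l} ∩ {e | σ e = true} : Set (Sym2 V)) =
      ((l.filter fun e => σ e).toFinset : Set (Sym2 V)) := by
    ext e; simp
  rw [negCount, this, Set.ncard_coe_finset, List.toFinset_card_of_nodup (hl.filter _)]

lemma negCount_cast_eq_walkSign {u v : V} {p : G.Walk u v} (hp : p.IsTrail) :
    (negCount σ p.toSubgraph.edgeSet : ZMod 2) = walkSign σ p := by
  have : p.toSubgraph.edgeSet = {e | e ∈ p.edges} := by
    ext e; simp
  rw [this, negCount_list hp.edges_nodup, walkSign, sum_map_edgeSign]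

lemma ncard_edgeSet_toSubgraph {u v : V} {p : G.Walk u v} (hp : p.IsTrail) :
    p.toSubgraph.edgeSet.ncard = p.length := by
  classical
  have : p.toSubgraph.edgeSet = (p.edges.toFinset : Set (Sym2 V)) := by
    ext e; simp
  rw [this, Set.ncard_coe_finset, List.toFinset_card_of_nodup hp.edges_nodup, Walk.length_edges]

lemma isCircuit_toSubgraph {u : V} {p : G.Walk u u} (hp : p.IsCycle) :
    IsCircuit G p.toSubgraph :=
  ⟨p.toSubgraph_connected, fun _ hv =>
    hp.ncard_neighborSet_toSubgraph_eq_two (by simpa using hv)⟩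

lemma isBalancedCircuit_toSubgraph {u : V} {p : G.Walk u u} (hp : p.IsCycle)
    (h : walkSign σ p = 0) : IsBalancedCircuit G σ p.toSubgraph := by
  refine ⟨isCircuit_toSubgraph hp, ?_⟩
  rw [← ZMod.natCast_eq_zero_iff_even, negCount_cast_eq_walkSign hp.isTrail, h]

lemma isUnbalancedCircuit_toSubgraph {u : V} {p : G.Walk u u} (hp : p.IsCycle)
    (h : walkSign σ p = 1) : IsUnbalancedCircuit G σ p.toSubgraph := by
  refine ⟨isCircuit_toSubgraph hp, ?_⟩
  rw [← ZMod.natCast_eq_one_iff_odd, negCount_cast_eq_walkSign hp.isTrail, h]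

variable (G σ) in
/-- The edge set `S` can be covered by sign-circuits of total length at most `c`. -/
def HasSignCover (S : Set (Sym2 V)) (c : ℕ) : Prop :=
  ∃ 𝓕 : Multiset G.Subgraph, (∀ H ∈ 𝓕, IsSignCircuit G σ H) ∧ Covers G 𝓕 S ∧
    coverLength G 𝓕 ≤ c

lemma HasSignCover.empty : HasSignCover G σ ∅ 0 :=
  ⟨0, by simp, by simp [Covers], by simp [coverLength]⟩

lemma HasSignCover.mono {S T : Set (Sym2 V)} {c d : ℕ} (h : HasSignCover G σ S c)
    (hS : T ⊆ S) (hc : c ≤ d) : HasSignCover G σ T d := by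
  obtain ⟨𝓕, h1, h2, h3⟩ := h
  exact ⟨𝓕, h1, fun e he => h2 e (hS he), h3.trans hc⟩

lemma HasSignCover.union {S T : Set (Sym2 V)} {c d : ℕ} (h : HasSignCover G σ S c)
    (h' : HasSignCover G σ T d) : HasSignCover G σ (S ∪ T) (c + d) := by
  obtain ⟨𝓕, h1, h2, h3⟩ := h
  obtain ⟨𝓕', h1', h2', h3'⟩ := h'
  refine ⟨𝓕 + 𝓕', ?_, ?_, ?_⟩
  · intro H hH
    rcases Multiset.mem_add.1 hH with hH | hH
    exacts [h1 H hH, h1' H hH]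
  · rintro e (he | he)
    · obtain ⟨H, hH, he⟩ := h2 e he
      exact ⟨H, Multiset.mem_add.2 (Or.inl hH), he⟩
    · obtain ⟨H, hH, he⟩ := h2' e he
      exact ⟨H, Multiset.mem_add.2 (Or.inr hH), he⟩
  · simp only [coverLength, Multiset.map_add, Multiset.sum_add] at *
    omega

lemma HasSignCover.biUnion {ι : Type*} (s : Finset ι) (S : ι → Set (Sym2 V)) (c : ι → ℕ)
    (h : ∀ i ∈ s, HasSignCover G σ (S i) (c i)) :
    HasSignCover G σ (⋃ i ∈ s, S i) (∑ i ∈ s, c i) := by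
  classical
  induction s using Finset.induction_on with
  | empty => simpa using HasSignCover.empty
  | insert a s ha ih =>
    rw [Finset.sum_insert ha, Finset.set_biUnion_insert]
    exact (h a (Finset.mem_insert_self a s)).union
      (ih fun i hi => h i (Finset.mem_insert_of_mem hi))

lemma HasSignCover.of_signCircuit {H : G.Subgraph} (h : IsSignCircuit G σ H) :
    HasSignCover G σ H.edgeSet H.edgeSet.ncard :=
  ⟨{H}, by simpa using h, fun e he => ⟨H, by simp, he⟩, by simp [coverLength]⟩

lemma HasSignCover.of_balanced_cycle {u : V} {p : G.Walk u u} (hp : p.IsCycle)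
    (h : walkSign σ p = 0) : HasSignCover G σ {e | e ∈ p.edges} p.length := by
  have := HasSignCover.of_signCircuit (Or.inl (isBalancedCircuit_toSubgraph hp h))
  rw [ncard_edgeSet_toSubgraph hp.isTrail] at this
  exact this.mono (fun e he => by simpa [Walk.mem_edges_toSubgraph] using he) le_rfl

/-- A walk into a set contains a path that stops as soon as it meets the set. -/
lemma SimpleGraph.Walk.exists_path_to_set (S : Set V) {x y : V} (w : G.Walk x y) (hy : y ∈ S) :
    ∃ u ∈ S, ∃ w' : G.Walk x u, w'.IsPath ∧ w'.length ≤ w.length ∧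
      w'.support ⊆ w.support ∧ ∀ z ∈ w'.support, z ∈ S → z = u := by
  classical
  induction w with
  | nil => exact ⟨_, hy, Walk.nil, by simp, by simp, by simp, by simp⟩
  | @cons x b y h w ih =>
    by_cases hx : x ∈ S
    · exact ⟨x, hx, Walk.nil, by simp, by simp, by simp, by simp⟩
    obtain ⟨u, hu, w', -, hl, hs, hz⟩ := ih hy
    refine ⟨u, hu, (Walk.cons h w').bypass, Walk.bypass_isPath _, ?_, ?_, ?_⟩
    · refine (Walk.length_bypass_le_length _).trans ?_
      simpa using hl
    · intro z hz
      have := Walk.support_bypass_subset_support _ hz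
      rw [Walk.support_cons] at this ⊢
      exact List.cons_subset_cons _ hs this
    · intro z hz' hzS
      have := Walk.support_bypass_subset_support _ hz'
      rw [Walk.support_cons, List.mem_cons] at this
      rcases this with rfl | h'
      · exact absurd hzS hx
      · exact hz z h' hzS

/-- A walk between two sets contains a path that meets the sets only at its ends. -/
lemma SimpleGraph.Walk.exists_path_between_sets (A B : Set V) {x y : V} (w : G.Walk x y)
    (hx : x ∈ A) (hy : y ∈ B) :
    ∃ u ∈ A, ∃ v ∈ B, ∃ w' : G.Walk u v, w'.IsPath ∧ w'.length ≤ w.length ∧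
      w'.support ⊆ w.support ∧ (∀ z ∈ w'.support, z ∈ A → z = u) ∧
      ∀ z ∈ w'.support, z ∈ B → z = v := by
  obtain ⟨v, hv, w₁, -, hl₁, hs₁, h₁⟩ := w.exists_path_to_set B hy
  obtain ⟨u, hu, w₂, hp₂, hl₂, hs₂, h₂⟩ := w₁.reverse.exists_path_to_set A hx
  have hs : w₂.support ⊆ w₁.support := fun z hz => by simpa using hs₂ hz
  refine ⟨u, hu, v, hv, w₂.reverse, hp₂.reverse, ?_, ?_, ?_, ?_⟩
  · simp only [Walk.length_reverse] at *; omega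
  · intro z hz
    exact hs₁ (hs (by simpa using hz))
  · intro z hz; exact h₂ z (by simpa using hz)
  · intro z hz; exact h₁ z (hs (by simpa using hz))

lemma isSignCircuit_barbell {r s u v : V} {p : G.Walk r r} {q : G.Walk s s}
    (hp : p.IsCycle) (hq : q.IsCycle) (hsp : walkSign σ p = 1) (hsq : walkSign σ q = 1)
    (hd : ∀ z ∈ p.support, z ∉ q.support) (w : G.Walk u v) (hw : w.IsPath)
    (hu : u ∈ p.support) (hv : v ∈ q.support) (hwp : ∀ z ∈ w.support, z ∈ p.support → z = u)
    (hwq : ∀ z ∈ w.support, z ∈ q.support → z = v) :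
    IsSignCircuit G σ (p.toSubgraph ⊔ q.toSubgraph ⊔ w.toSubgraph) := by
  refine Or.inr ⟨p.toSubgraph, q.toSubgraph, w.toSubgraph, u, v,
    isUnbalancedCircuit_toSubgraph hp hsp, isUnbalancedCircuit_toSubgraph hq hsq,
    ⟨w, hw, by ext; simp, by ext; simp⟩, by simpa, by simpa, ?_, ?_,
    ?_, ?_, rfl⟩
  · ext z
    simp only [Set.mem_inter_iff, Walk.mem_verts_toSubgraph, Set.mem_singleton_iff]
    exact ⟨fun h => hwp z h.1 h.2, by rintro rfl; exact ⟨w.start_mem_support, hu⟩⟩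
  · ext z
    simp only [Set.mem_inter_iff, Walk.mem_verts_toSubgraph, Set.mem_singleton_iff]
    exact ⟨fun h => hwq z h.1 h.2, by rintro rfl; exact ⟨w.end_mem_support, hv⟩⟩
  · rintro z ⟨h1, h2⟩
    exact absurd (by simpa using h2) (hd z (by simpa using h1))
  · ext e
    simp only [Set.mem_inter_iff, Walk.mem_edges_toSubgraph, Set.mem_empty_iff_false, iff_false]
    induction e with
    | _ a b =>
      rintro ⟨h1, h2⟩
      exact hd a (p.fst_mem_support_of_mem_edges h1) (q.fst_mem_support_of_mem_edges h2)

lemma Set.ncard_union_le₃ {α : Type*} (A B C : Set α) :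
    (A ∪ B ∪ C).ncard ≤ A.ncard + B.ncard + C.ncard := by
  have h1 := Set.ncard_union_le (A ∪ B) C
  have h2 := Set.ncard_union_le A B
  omega

lemma card_support_toFinset_of_isCycle [DecidableEq V] {u : V} {p : G.Walk u u}
    (hp : p.IsCycle) : p.support.toFinset.card = p.length := by
  have h : p.support.toFinset = p.support.tail.toFinset := by
    ext z
    simp only [List.mem_toFinset]
    refine ⟨fun h => ?_, fun h => List.mem_of_mem_tail h⟩
    rcases (Walk.mem_support_iff p).1 h with rfl | h
    · exact Walk.end_mem_tail_support (by rintro h; exact hp.ne_nil (by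
        cases p with
        | nil => rfl
        | cons => simp at h))
    · exact h
  rw [h, List.toFinset_card_of_nodup hp.support_nodup]
  simp

lemma card_support_toFinset_of_isPath [DecidableEq V] {u v : V} {p : G.Walk u v}
    (hp : p.IsPath) : p.support.toFinset.card = p.length + 1 := by
  rw [List.toFinset_card_of_nodup hp.support_nodup, Walk.length_support]

/-- Two vertex-disjoint unbalanced cycles joined by a walk lie in a barbell. -/
lemma HasSignCover.of_disjoint_unbalanced [Fintype V] {r s x y : V} {p : G.Walk r r}
    {q : G.Walk s s} (hp : p.IsCycle) (hq : q.IsCycle) (hsp : walkSign σ p = 1)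
    (hsq : walkSign σ q = 1) (hd : ∀ z ∈ p.support, z ∉ q.support) (w : G.Walk x y)
    (hx : x ∈ p.support) (hy : y ∈ q.support) :
    HasSignCover G σ ({e | e ∈ p.edges} ∪ {e | e ∈ q.edges})
      (min (p.length + q.length + w.length) (Fintype.card V + 1)) := by
  classical
  obtain ⟨u, hu, v, hv, w', hw', hl, -, hwp, hwq⟩ :=
    w.exists_path_between_sets {z | z ∈ p.support} {z | z ∈ q.support} hx hy
  have hb := HasSignCover.of_signCircuit
    (isSignCircuit_barbell hp hq hsp hsq hd w' hw' hu hv hwp hwq)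
  have hE : (p.toSubgraph ⊔ q.toSubgraph ⊔ w'.toSubgraph).edgeSet.ncard ≤
      p.length + q.length + w'.length := by
    rw [← ncard_edgeSet_toSubgraph hp.isTrail, ← ncard_edgeSet_toSubgraph hq.isTrail,
      ← ncard_edgeSet_toSubgraph hw'.isTrail, Subgraph.edgeSet_sup, Subgraph.edgeSet_sup]
    exact Set.ncard_union_le₃ _ _ _
  refine hb.mono (fun e he => ?_) ?_
  · simp only [Subgraph.edgeSet_sup, Set.mem_union, Walk.mem_edges_toSubgraph]
    exact Or.inl he
  refine le_min (hE.trans (by omega)) ?_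
  have h1 : (p.support.toFinset ∪ q.support.toFinset).card = p.length + q.length := by
    rw [Finset.card_union_of_disjoint, card_support_toFinset_of_isCycle hp,
      card_support_toFinset_of_isCycle hq]
    rw [Finset.disjoint_left]
    intro z; simpa using hd z
  have h2 : ((p.support.toFinset ∪ q.support.toFinset) ∩ w'.support.toFinset).card ≤ 2 := by
    refine (Finset.card_le_card (t := {u, v}) ?_).trans Finset.card_le_two
    intro z
    simp only [Finset.mem_inter, Finset.mem_union, List.mem_toFinset, Finset.mem_insert,
      Finset.mem_singleton]
    rintro ⟨h | h, h'⟩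
    exacts [Or.inl (hwp z h' h), Or.inr (hwq z h' h)]
  have h3 := Finset.card_union_add_card_inter (p.support.toFinset ∪ q.support.toFinset)
    w'.support.toFinset
  rw [h1, card_support_toFinset_of_isPath hw'] at h3
  have h4 := Finset.card_le_univ ((p.support.toFinset ∪ q.support.toFinset) ∪
    w'.support.toFinset)
  omega

end SignedWalks

section CycleFactors

variable {V : Type*} {G : SimpleGraph V} {σ : Sym2 V → Bool}

variable (G) in
/-- A partition of the vertices of `G` into cycles of `G` indexed by `ι`. -/
structure CycleFactor (ι : Type*) where
  /-- The index of the cycle through a vertex. -/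
  comp : V → ι
  /-- The base point of a cycle. -/
  base : ι → V
  /-- The cycles. -/
  cyc : ∀ i, G.Walk (base i) (base i)
  isCycle : ∀ i, (cyc i).IsCycle
  mem_support : ∀ i v, v ∈ (cyc i).support ↔ comp v = i

namespace CycleFactor

variable {ι : Type*} (F : CycleFactor G ι)

lemma comp_base (i : ι) : F.comp (F.base i) = i :=
  (F.mem_support i _).1 (Walk.start_mem_support _)

lemma comp_eq_of_mem_edges {i : ι} {e : Sym2 V} (he : e ∈ (F.cyc i).edges) {v : V}
    (hv : v ∈ e) : F.comp v = i := by
  refine (F.mem_support i v).1 ?_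
  induction e with
  | _ a b =>
    rcases Sym2.mem_iff.1 hv with rfl | rfl
    exacts [Walk.fst_mem_support_of_mem_edges _ he, Walk.snd_mem_support_of_mem_edges _ he]

lemma eq_of_mem_edges {i j : ι} {e : Sym2 V} (hi : e ∈ (F.cyc i).edges)
    (hj : e ∈ (F.cyc j).edges) : i = j := by
  induction e with
  | _ a b =>
    rw [← F.comp_eq_of_mem_edges hi (Sym2.mem_mk_left a b),
      ← F.comp_eq_of_mem_edges hj (Sym2.mem_mk_left a b)]

lemma disjoint_support {i j : ι} (hij : i ≠ j) (z : V) (hz : z ∈ (F.cyc i).support) :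
    z ∉ (F.cyc j).support := by
  rw [F.mem_support] at *
  exact fun h => hij (hz.symm.trans h)

lemma length_eq_card [Fintype V] [DecidableEq ι] (i : ι) :
    (F.cyc i).length = (Finset.univ.filter fun v => F.comp v = i).card := by
  classical
  rw [← card_support_toFinset_of_isCycle (F.isCycle i)]
  congr 1
  ext v
  simp [F.mem_support]

lemma sum_length [Fintype V] [Fintype ι] :
    ∑ i, (F.cyc i).length = Fintype.card V := by
  classical
  simp_rw [F.length_eq_card]
  exact (Finset.card_eq_sum_card_fiberwise (fun v _ => Finset.mem_univ (F.comp v))).symm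

lemma sum_walkSign [Fintype V] [Fintype ι] [DecidableEq V] (E : Finset (Sym2 V))
    (hE : ∀ e, e ∈ E ↔ ∃ i, e ∈ (F.cyc i).edges) :
    ∑ i, walkSign σ (F.cyc i) = ∑ e ∈ E, edgeSign σ e := by
  have h1 : E = Finset.univ.biUnion fun i => (F.cyc i).edges.toFinset := by
    ext e; simp [hE]
  rw [h1, Finset.sum_biUnion]
  · refine Finset.sum_congr rfl fun i _ => ?_
    rw [walkSign, List.sum_toFinset _ (F.isCycle i).edges_nodup]
  · intro i _ j _ hij
    rw [Function.onFun, Finset.disjoint_left]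
    intro e
    simp only [List.mem_toFinset]
    exact fun h h' => hij (F.eq_of_mem_edges h h')

end CycleFactor

lemma exists_cycleFactor [Finite V] {H : SimpleGraph V} (hH : H ≤ G)
    (hdeg : ∀ v, (H.neighborSet v).ncard = 2) :
    ∃ F : CycleFactor G H.ConnectedComponent, (∀ v, F.comp v = H.connectedComponentMk v) ∧
      ∀ i e, e ∈ (F.cyc i).edges ↔ e ∈ H.edgeSet ∧ ∀ v ∈ e, F.comp v = i := by
  classical
  have hcyc : H.IsCycles := fun v _ => hdeg v
  have key : ∀ K : H.ConnectedComponent, ∃ v, ∃ p : H.Walk v v, p.IsCycle ∧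
      p.toSubgraph.verts = K.supp := by
    intro K
    obtain ⟨v, hv⟩ := K.nonempty_supp
    refine ⟨v, hcyc.exists_cycle_toSubgraph_verts_eq_connectedComponentSupp hv ?_⟩
    apply Set.nonempty_of_ncard_ne_zero
    rw [hdeg]; decide
  choose b p hp hs using key
  have hmem : ∀ K v, v ∈ (p K).support ↔ H.connectedComponentMk v = K := by
    intro K v
    rw [← Walk.mem_verts_toSubgraph, hs]
    exact ConnectedComponent.mem_supp_iff _ _
  refine ⟨⟨H.connectedComponentMk, b, fun K => (p K).mapLe hH, fun K => (hp K).mapLe hH,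
    fun K v => by rw [Walk.support_mapLe_eq_support]; exact hmem K v⟩, fun _ => rfl, ?_⟩
  intro K e
  rw [Walk.edges_mapLe_eq_edges]
  induction e with
  | _ a b =>
  constructor
  · intro he
    refine ⟨Walk.edges_subset_edgeSet _ he, fun v hv => (hmem K v).1 ?_⟩
    rcases Sym2.mem_iff.1 hv with rfl | rfl
    exacts [Walk.fst_mem_support_of_mem_edges _ he, Walk.snd_mem_support_of_mem_edges _ he]
  · rintro ⟨he, hv⟩
    have ha : a ∈ (p K).support := (hmem K a).2 (hv a (Sym2.mem_mk_left a b))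
    have heq : (p K).toSubgraph.neighborSet a = H.neighborSet a := by
      refine Set.eq_of_subset_of_ncard_le (Subgraph.neighborSet_subset _ _) ?_
        (Set.toFinite _)
      rw [hdeg, (hp K).ncard_neighborSet_toSubgraph_eq_two ha]
    have hb : b ∈ (p K).toSubgraph.neighborSet a := by rw [heq]; exact he
    rw [← Walk.mem_edges_toSubgraph]
    exact hb

end CycleFactors

section Colors

variable {V : Type*} {G : SimpleGraph V} {c : Sym2 V → Fin 3}

variable (G c) in
/-- The graph spanned by the edges whose color differs from `k`. -/
abbrev colorDelete (k : Fin 3) : SimpleGraph V := G.deleteEdges {e | c e = k}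

lemma colorDelete_adj {k : Fin 3} {v w : V} :
    (colorDelete G c k).Adj v w ↔ G.Adj v w ∧ c s(v, w) ≠ k := by
  simp [colorDelete]

lemma Proper3EdgeColoring.injOn (hc : Proper3EdgeColoring G c) (v : V) :
    Set.InjOn (fun w => c s(v, w)) (G.neighborSet v) := by
  intro a ha b hb hab
  by_contra hne
  exact hc s(v, a) ha s(v, b) hb (by rwa [ne_eq, Sym2.congr_right])
    ⟨v, by simp, by simp⟩ hab

lemma Proper3EdgeColoring.exists_adj [Finite V] (hc : Proper3EdgeColoring G c) (hG : IsCubic G)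
    (v : V) (k : Fin 3) : ∃ w, G.Adj v w ∧ c s(v, w) = k := by
  have h := (hc.injOn v).ncard_image
  rw [hG v] at h
  have : (fun w => c s(v, w)) '' G.neighborSet v = Set.univ := by
    refine Set.eq_of_subset_of_ncard_le (Set.subset_univ _) ?_ (Set.toFinite _)
    rw [h, Set.ncard_univ]; simp
  have hk : k ∈ (fun w => c s(v, w)) '' G.neighborSet v := by rw [this]; trivial
  obtain ⟨w, hw, h⟩ := hk
  exact ⟨w, hw, h⟩

lemma Proper3EdgeColoring.ncard_neighborSet_colorDelete [Finite V]
    (hc : Proper3EdgeColoring G c) (hG : IsCubic G) (k : Fin 3) (v : V) :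
    ((colorDelete G c k).neighborSet v).ncard = 2 := by
  have hsub : (colorDelete G c k).neighborSet v ⊆ G.neighborSet v := fun w hw =>
    (colorDelete_adj.1 hw).1
  rw [← ((hc.injOn v).mono hsub).ncard_image]
  have : (fun w => c s(v, w)) '' (colorDelete G c k).neighborSet v = {k}ᶜ := by
    ext i
    constructor
    · rintro ⟨w, hw, rfl⟩
      exact (colorDelete_adj.1 hw).2
    · intro hi
      obtain ⟨w, hw, rfl⟩ := hc.exists_adj hG v i
      exact ⟨w, colorDelete_adj.2 ⟨hw, hi⟩, rfl⟩
  rw [this, Set.ncard_compl, Set.ncard_singleton]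
  simp

lemma Proper3EdgeColoring.exists_cycleFactor [Finite V] (hc : Proper3EdgeColoring G c)
    (hG : IsCubic G) (k : Fin 3) :
    ∃ F : CycleFactor G (colorDelete G c k).ConnectedComponent,
      (∀ v, F.comp v = (colorDelete G c k).connectedComponentMk v) ∧
      ∀ i e, e ∈ (F.cyc i).edges ↔ (e ∈ G.edgeSet ∧ c e ≠ k) ∧ ∀ v ∈ e, F.comp v = i := by
  obtain ⟨F, h1, h2⟩ := _root_.exists_cycleFactor (G := G) (H := colorDelete G c k)
    (deleteEdges_le _) (hc.ncard_neighborSet_colorDelete hG k)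
  refine ⟨F, h1, fun i e => ?_⟩
  rw [h2, edgeSet_deleteEdges]
  rfl

end Colors

section Genus

lemma Matrix.card_le_rank_add_one {m n K : Type*} [Fintype m] [Fintype n] [Field K]
    (A : Matrix m n K) (hA : ∀ x : n → K, A.mulVec x = 0 → ∀ i j, x i = x j) :
    Fintype.card n ≤ A.rank + 1 := by
  classical
  have h1 := LinearMap.finrank_range_add_finrank_ker A.mulVecLin
  rw [Module.finrank_fintype_fun_eq_card] at h1
  have h2 : Module.finrank K (LinearMap.ker A.mulVecLin) ≤ 1 := by
    by_cases hn : Nonempty n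
    · obtain ⟨i₀⟩ := hn
      let f : LinearMap.ker A.mulVecLin →ₗ[K] K :=
        (LinearMap.proj i₀).comp (LinearMap.ker A.mulVecLin).subtype
      have hf : Function.Injective f := by
        rw [← LinearMap.ker_eq_bot, LinearMap.ker_eq_bot']
        rintro ⟨x, hx⟩ h
        have hx' : A.mulVec x = 0 := by simpa using hx
        have h0 : x i₀ = 0 := h
        ext i
        exact (hA x hx' i i₀).trans h0
      simpa using LinearMap.finrank_le_finrank_of_injective hf
    · have := not_nonempty_iff.1 hn
      refine (Submodule.finrank_le _).trans ?_
      simp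
  rw [Matrix.rank]
  omega

variable {V : Type*} {G : SimpleGraph V} {c : Sym2 V → Fin 3}

lemma SimpleGraph.Connected.eq_of_forall_adj {α : Type*} (hG : G.Connected) (f : V → α)
    (h : ∀ u v, G.Adj u v → f u = f v) (u v : V) : f u = f v := by
  obtain ⟨w⟩ := hG.preconnected u v
  induction w with
  | nil => rfl
  | cons h' _ ih => exact (h _ _ h').trans ih

lemma card_edgeSet_of_isCubic [Fintype V] (hG : IsCubic G) :
    2 * G.edgeSet.ncard = 3 * Fintype.card V := by
  classical
  have h1 := G.sum_degrees_eq_twice_card_edges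
  have h2 : ∀ v, G.degree v = 3 := fun v => by
    rw [← hG v, ← SimpleGraph.card_neighborSet_eq_degree, Set.ncard_eq_toFinset_card',
      Set.toFinset_card]
  simp only [h2, Finset.sum_const, Finset.card_univ, smul_eq_mul] at h1
  rw [← SimpleGraph.coe_edgeFinset, Set.ncard_coe_finset]
  omega

lemma fin_three_third (i j : Fin 3) (h : i ≠ j) :
    ∃ k, k ≠ i ∧ k ≠ j ∧ ∀ l, l = i ∨ l = j ∨ l = k := by
  revert i j; decide

open Classical in
/-- The Euler-type bound on the number of bicolored cycles of an edge-colored cubic graph. -/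
lemma Proper3EdgeColoring.sum_card_components_le [Fintype V] (hc : Proper3EdgeColoring G c)
    (hG : IsCubic G) (hconn : G.Connected) :
    2 * ∑ k, Fintype.card (colorDelete G c k).ConnectedComponent ≤ Fintype.card V + 4 := by
  let mk (k : Fin 3) (v : V) := (colorDelete G c k).connectedComponentMk v
  let Idx := Σ k, (colorDelete G c k).ConnectedComponent
  let M : Matrix V G.edgeSet (ZMod 2) := fun v e => if v ∈ e.1 then 1 else 0
  let B : Matrix G.edgeSet Idx (ZMod 2) := fun e x =>
    if c e.1 ≠ x.1 ∧ ∃ v ∈ e.1, mk x.1 v = x.2 then 1 else 0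
  have hMa : ∀ v e, M v e = if v ∈ e.1 then 1 else 0 := fun _ _ => rfl
  have hBa : ∀ e x, B e x = if c e.1 ≠ x.1 ∧ ∃ v ∈ e.1, mk x.1 v = x.2 then 1 else 0 :=
    fun _ _ => rfl
  have hmk : ∀ k u v, G.Adj u v → c s(u, v) ≠ k → mk k u = mk k v := fun k u v h h' =>
    ConnectedComponent.sound (colorDelete_adj.2 ⟨h, h'⟩).reachable
  have hMB : M * B = 0 := by
    ext v ⟨k, K⟩
    simp only [Matrix.mul_apply, hMa, hBa, Matrix.zero_apply, ite_mul, one_mul, zero_mul]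
    rw [← Finset.sum_filter, ← Finset.sum_filter, Finset.filter_filter, Finset.sum_const,
      nsmul_eq_mul, mul_one]
    by_cases hv : mk k v = K
    · have : (Finset.univ.filter fun e : G.edgeSet =>
          v ∈ e.1 ∧ c e.1 ≠ k ∧ ∃ v ∈ e.1, mk k v = K).card = 2 := by
        rw [← hc.ncard_neighborSet_colorDelete hG k v, ← Set.ncard_coe_finset]
        symm
        refine Set.ncard_congr (fun w hw => ⟨s(v, w), (colorDelete_adj.1 hw).1⟩) ?_ ?_ ?_
        · intro w hw
          simpa using ⟨(colorDelete_adj.1 hw).2, Or.inl hv⟩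
        · intro a b ha hb hab
          exact Sym2.congr_right.1 (Subtype.ext_iff.1 hab)
        · rintro ⟨e, he⟩ h
          simp only [Finset.coe_filter, Finset.mem_univ, true_and, Set.mem_ofPred_eq] at h
          obtain ⟨w, rfl⟩ := Sym2.mem_iff_exists.1 h.1
          exact ⟨w, colorDelete_adj.2 ⟨he, h.2.1⟩, rfl⟩
      rw [this]; decide
    · rw [Finset.card_eq_zero.2, Nat.cast_zero]
      rw [Finset.filter_eq_empty_iff]
      rintro ⟨e, he⟩ - ⟨h1, h2, u, hu, h3⟩
      obtain ⟨w, rfl⟩ := Sym2.mem_iff_exists.1 h1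
      simp only at h2 h3 hu
      have := hmk k v w he h2
      rcases Sym2.mem_iff.1 hu with rfl | rfl
      · exact hv h3
      · exact hv (this.trans h3)
  have hM : Fintype.card V ≤ M.rank + 1 := by
    rw [← Matrix.rank_transpose]
    refine Matrix.card_le_rank_add_one _ fun x hx => ?_
    refine hconn.eq_of_forall_adj x fun u v huv => ?_
    have h := congrFun hx ⟨s(u, v), huv⟩
    simp only [Matrix.mulVec, dotProduct, Matrix.transpose_apply, hMa, ite_mul, one_mul, zero_mul,
      Pi.zero_apply] at h
    rw [← Finset.sum_filter] at h
    have h' : (Finset.univ.filter fun z => z ∈ s(u, v)) = {u, v} := by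
      ext z; simp
    rw [h', Finset.sum_pair huv.ne] at h
    exact CharTwo.add_eq_zero.1 h
  have hB : Fintype.card Idx ≤ B.rank + 1 := by
    refine Matrix.card_le_rank_add_one _ fun x hx => ?_
    have h1 : ∀ u v, G.Adj u v → ∀ k l, k ≠ l → c s(u, v) ≠ k → c s(u, v) ≠ l →
        x ⟨k, mk k u⟩ = x ⟨l, mk l u⟩ := by
      intro u v huv k l hkl hk hl
      have h := congrFun hx ⟨s(u, v), huv⟩
      simp only [Matrix.mulVec, dotProduct, hBa, ite_mul, one_mul, zero_mul, Pi.zero_apply] at h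
      rw [← Finset.sum_filter] at h
      have h' : (Finset.univ.filter fun y : Idx =>
          c s(u, v) ≠ y.1 ∧ ∃ z ∈ s(u, v), mk y.1 z = y.2) =
          {⟨k, mk k u⟩, ⟨l, mk l u⟩} := by
        ext ⟨i, K⟩
        simp only [Finset.mem_filter, Finset.mem_univ, true_and, Finset.mem_insert,
          Finset.mem_singleton]
        constructor
        · rintro ⟨h1, z, hz, rfl⟩
          have hz' : mk i z = mk i u := by
            rcases Sym2.mem_iff.1 hz with rfl | rfl
            · rfl
            · exact (hmk i u _ huv h1).symm
          have : i = k ∨ i = l := by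
            revert hk hl h1 hkl
            generalize c s(u, v) = m
            clear * -
            revert i k l m
            decide
          rcases this with rfl | rfl
          · exact Or.inl (by rw [hz'])
          · exact Or.inr (by rw [hz'])
        · rintro (h | h)
          · obtain ⟨rfl, h⟩ := Sigma.mk.inj_iff.1 h
            exact ⟨hk, u, by simp, (eq_of_heq h).symm⟩
          · obtain ⟨rfl, h⟩ := Sigma.mk.inj_iff.1 h
            exact ⟨hl, u, by simp, (eq_of_heq h).symm⟩
      rw [h', Finset.sum_pair (fun h => hkl (Sigma.mk.inj_iff.1 h).1)] at h
      exact CharTwo.add_eq_zero.1 h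
    have h2 : ∀ u k l, x ⟨k, mk k u⟩ = x ⟨l, mk l u⟩ := by
      intro u k l
      by_cases hkl : k = l
      · rw [hkl]
      obtain ⟨m, hmk, hml, -⟩ := fin_three_third k l hkl
      obtain ⟨v, hv, hm⟩ := hc.exists_adj hG u m
      exact h1 u v hv k l hkl (hm ▸ hmk) (hm ▸ hml)
    have h3 : ∀ u v, x ⟨0, mk 0 u⟩ = x ⟨0, mk 0 v⟩ := by
      refine hconn.eq_of_forall_adj _ fun u v huv => ?_
      obtain ⟨k, hk⟩ : ∃ k, k ≠ c s(u, v) := exists_ne _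
      rw [h2 u 0 k, h2 v 0 k, hmk k u v huv hk.symm]
    rintro ⟨k, K⟩ ⟨l, L⟩
    obtain ⟨u, rfl⟩ := K.exists_rep
    obtain ⟨v, rfl⟩ := L.exists_rep
    change x ⟨k, mk k u⟩ = x ⟨l, mk l v⟩
    rw [h2 u k 0, h2 v l 0, h3 u v]
  have hr := Matrix.rank_add_rank_le_card_of_mul_eq_zero hMB
  have hE := card_edgeSet_of_isCubic hG
  have hE' : Fintype.card G.edgeSet = G.edgeSet.ncard := by
    rw [Set.ncard_eq_toFinset_card', Set.toFinset_card]
  have hI : Fintype.card Idx = ∑ k, Fintype.card (colorDelete G c k).ConnectedComponent :=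
    Fintype.card_sigma
  omega

end Genus

section Tours

variable {V : Type*} {G : SimpleGraph V} {σ : Sym2 V → Bool}

lemma SimpleGraph.Connected.exists_adj_of_mem_of_notMem (hG : G.Connected) (S : Set V) {a b : V}
    (ha : a ∈ S) (hb : b ∉ S) : ∃ u v, G.Adj u v ∧ u ∈ S ∧ v ∉ S := by
  obtain ⟨w⟩ := hG.preconnected a b
  obtain ⟨d, -, h1, h2⟩ := w.exists_boundary_dart S ha hb
  exact ⟨_, _, d.adj, h1, h2⟩

lemma CycleFactor.exists_closed_walk {ι : Type*} [Fintype ι] (F : CycleFactor G ι)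
    (hG : G.Connected) (k : ℕ) (hk : k + 1 ≤ Fintype.card ι) :
    ∃ s : Finset ι, s.card = k + 1 ∧ ∃ x, ∃ w : G.Walk x x,
      (∀ v, F.comp v ∈ s → v ∈ w.support) ∧
      w.length ≤ ∑ i ∈ s, (F.cyc i).length + 2 * k := by
  classical
  induction k with
  | zero =>
    obtain ⟨i⟩ : Nonempty ι := Fintype.card_pos_iff.1 (by omega)
    exact ⟨{i}, by simp, F.base i, F.cyc i, by simp [F.mem_support], by simp⟩
  | succ k ih =>
    obtain ⟨s, hs, x, w, hw, hl⟩ := ih (by omega)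
    obtain ⟨i, hi⟩ : s.Nonempty := Finset.card_pos.1 (by omega)
    obtain ⟨j, hj⟩ : ∃ j, j ∉ s := by
      by_contra! h
      have := Finset.card_le_card (fun j _ => h j : Finset.univ ⊆ s)
      rw [Finset.card_univ] at this
      omega
    obtain ⟨a, b, hab, ha, hb⟩ := hG.exists_adj_of_mem_of_notMem {v | F.comp v ∈ s}
      (a := F.base i) (b := F.base j) (by simpa [F.comp_base]) (by simpa [F.comp_base])
    have ha' := hw a ha
    have hb' : b ∈ (F.cyc (F.comp b)).support := (F.mem_support _ _).2 rfl
    refine ⟨insert (F.comp b) s, by rw [Finset.card_insert_of_notMem hb, hs], a,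
      (w.rotate a ha').append
        (Walk.cons hab (((F.cyc (F.comp b)).rotate b hb').append (Walk.cons hab.symm Walk.nil))),
      ?_, ?_⟩
    · intro v hv
      simp only [Walk.mem_support_append_iff, Walk.support_cons, List.mem_cons,
        Walk.mem_support_rotate_iff]
      rcases Finset.mem_insert.1 hv with h | h
      · exact Or.inr (Or.inr (Or.inl ((F.mem_support _ _).2 h)))
      · exact Or.inl (hw v h)
    · rw [Finset.sum_insert hb]
      simp only [Walk.length_append, Walk.length_cons, Walk.length_nil, Walk.length_rotate]
      omega

/-- A connected graph with a cycle factor has a short periodic tour of all its vertices. -/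
lemma CycleFactor.exists_tour {ι : Type*} [Fintype V] [Fintype ι] (F : CycleFactor G ι)
    (hG : G.Connected) :
    ∃ (L : ℕ) (x : ℕ → V), L + 2 ≤ Fintype.card V + 2 * Fintype.card ι ∧
      (∀ a, x (a + L) = x a) ∧ (∀ a, G.Adj (x a) (x (a + 1))) ∧ ∀ v, ∃ a < L, x a = v := by
  classical
  obtain ⟨v₀⟩ := hG.nonempty
  have hι : 0 < Fintype.card ι := Fintype.card_pos_iff.2 ⟨F.comp v₀⟩
  obtain ⟨s, hs, r, w, hw, hl⟩ := F.exists_closed_walk hG (Fintype.card ι - 1) (by omega)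
  obtain rfl : s = Finset.univ := Finset.card_eq_iff_eq_univ _ |>.1 (by omega)
  rw [F.sum_length] at hl
  have hall : ∀ v, v ∈ w.support := fun v => hw v (Finset.mem_univ _)
  have hpos : 0 < w.length := by
    by_contra h
    have h0 : w.length = 0 := by omega
    have hv : ∀ v, v = r := fun v => by
      have := hall v
      rwa [Walk.nil_iff_support_eq.1 (Walk.length_eq_zero_iff.1 h0), List.mem_singleton] at this
    have h3 := (F.isCycle (F.comp v₀)).three_le_length
    have h4 := F.length_eq_card (F.comp v₀)
    have h5 := (Finset.card_filter_le Finset.univ fun v => F.comp v = F.comp v₀)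
    have h6 : Fintype.card V ≤ 1 := Fintype.card_le_one_iff.2 fun a b => (hv a).trans (hv b).symm
    rw [Finset.card_univ] at h5
    omega
  refine ⟨w.length, fun a => w.getVert (a % w.length), by omega, fun a => by simp, ?_, ?_⟩
  · intro a
    have hlt := Nat.mod_lt a hpos
    have hadj := w.adj_getVert_succ hlt
    convert hadj using 1
    have h1 := Nat.add_mod a 1 w.length
    by_cases h : a % w.length + 1 = w.length
    · have : (a + 1) % w.length = 0 := by
        rw [← Nat.dvd_iff_mod_eq_zero]
        rw [← Nat.div_add_mod a w.length, add_assoc, h]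
        exact Nat.dvd_add (Nat.dvd_mul_right _ _) dvd_rfl
      simp only [this, h]
      rw [Walk.getVert_zero, Walk.getVert_length]
    · have : (a + 1) % w.length = a % w.length + 1 := by
        rw [Nat.add_mod, Nat.mod_eq_of_lt (a := 1) (by omega), Nat.mod_eq_of_lt (by omega)]
      simp only [this]
  · intro v
    obtain ⟨m, hm, hml⟩ := Walk.mem_support_iff_exists_getVert.1 (hall v)
    by_cases h : m = w.length
    · refine ⟨0, hpos, ?_⟩
      change w.getVert (0 % _) = v
      rw [Nat.zero_mod, Walk.getVert_zero, ← hm, h, Walk.getVert_length]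
    · exact ⟨m, by omega, by simpa only [Nat.mod_eq_of_lt (show m < w.length by omega)] using hm⟩

/-- The sum of the gaps between consecutive pairs of a list. -/
def pairGap : List ℕ → ℕ
  | a :: b :: l => (b - a) + pairGap l
  | _ => 0

lemma pairGap_add_pairGap_append (e : ℕ) :
    ∀ (m : List ℕ) (a : ℕ), (a :: m).Pairwise (· ≤ ·) → (∀ b ∈ a :: m, b ≤ e) →
      Even (a :: m).length → pairGap (a :: m) + pairGap (m ++ [e]) = e - a
  | [], a, _, _, h => by simp at h
  | [b], a, hs, he, _ => by
    have h1 : a ≤ b := by simpa using hs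
    have h2 := he b (by simp)
    simp only [pairGap, List.cons_append, List.nil_append]
    omega
  | b :: c :: m, a, hs, he, h => by
    have ih := pairGap_add_pairGap_append e m c
      ((List.pairwise_cons.1 (List.pairwise_cons.1 hs).2).2)
      (fun x hx => he x (by simp only [List.mem_cons] at hx ⊢; tauto))
      (by simpa [Nat.even_add_one] using h)
    have h1 : a ≤ b := (List.pairwise_cons.1 hs).1 b (by simp)
    have h2 : b ≤ c := (List.pairwise_cons.1 (List.pairwise_cons.1 hs).2).1 c (by simp)
    have h3 := he c (by simp)
    simp only [pairGap, List.cons_append] at ih ⊢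
    omega

lemma exists_walk_of_forall_adj {x : ℕ → V} (hx : ∀ a, G.Adj (x a) (x (a + 1))) (a m : ℕ) :
    ∃ w : G.Walk (x a) (x (a + m)), w.length = m := by
  induction m with
  | zero => exact ⟨Walk.nil, rfl⟩
  | succ m ih =>
    obtain ⟨w, hw⟩ := ih
    exact ⟨w.concat (hx (a + m)), by simp [hw]⟩

lemma CycleFactor.hasSignCover_pairGap {ι : Type*} [Fintype V] (F : CycleFactor G ι)
    {x : ℕ → V} (hx : ∀ a, G.Adj (x a) (x (a + 1))) :
    ∀ l : List ℕ, l.Pairwise (· ≤ ·) → Even l.length →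
      (l.map fun a => F.comp (x a)).Nodup →
      (∀ a ∈ l, walkSign σ (F.cyc (F.comp (x a))) = 1) →
      HasSignCover G σ {e | ∃ a ∈ l, e ∈ (F.cyc (F.comp (x a))).edges}
        ((l.map fun a => (F.cyc (F.comp (x a))).length).sum + pairGap l)
  | [], _, _, _, _ => HasSignCover.empty.mono (by simp) (by simp)
  | [a], _, h, _, _ => by simp at h
  | a :: b :: l, hs, h, hn, hu => by
    have ih := F.hasSignCover_pairGap hx l
      ((List.pairwise_cons.1 (List.pairwise_cons.1 hs).2).2)
      (by simpa [Nat.even_add_one] using h) (by simp at hn; exact hn.2.2)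
      (fun c hc => hu c (by simp [hc]))
    have hab : a ≤ b := (List.pairwise_cons.1 hs).1 b (by simp)
    have hne : F.comp (x a) ≠ F.comp (x b) := by
      intro h'
      simp [h'] at hn
    obtain ⟨w, hw⟩ := exists_walk_of_forall_adj hx a (b - a)
    rw [Nat.add_sub_cancel' hab] at w
    obtain ⟨w, hw⟩ : ∃ w : G.Walk (x a) (x b), w.length = b - a := by
      have := exists_walk_of_forall_adj hx a (b - a)
      rwa [Nat.add_sub_cancel' hab] at this
    have h1 := HasSignCover.of_disjoint_unbalanced (F.isCycle _) (F.isCycle _)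
      (hu a (by simp)) (hu b (by simp)) (F.disjoint_support hne) w
      ((F.mem_support _ _).2 rfl) ((F.mem_support _ _).2 rfl)
    refine (h1.union ih).mono ?_ ?_
    · rintro e ⟨c, hc, he⟩
      rcases List.mem_cons.1 hc with rfl | hc
      · exact Or.inl (Or.inl he)
      rcases List.mem_cons.1 hc with rfl | hc
      · exact Or.inl (Or.inr he)
      · exact Or.inr ⟨c, hc, he⟩
    · simp only [List.map_cons, List.sum_cons, pairGap, hw]
      omega

lemma CycleFactor.hasSignCover_balanced {ι : Type*} (F : CycleFactor G ι) (s : Finset ι)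
    (hs : ∀ i ∈ s, walkSign σ (F.cyc i) = 0) :
    HasSignCover G σ {e | ∃ i ∈ s, e ∈ (F.cyc i).edges} (∑ i ∈ s, (F.cyc i).length) := by
  refine (HasSignCover.biUnion s (fun i => {e | e ∈ (F.cyc i).edges}) _ fun i hi =>
    HasSignCover.of_balanced_cycle (F.isCycle i) (hs i hi)).mono ?_ le_rfl
  rintro e ⟨i, hi, he⟩
  exact Set.mem_biUnion hi he

/-- Pairing up the unbalanced cycles along a closed tour of length `L`. -/
lemma CycleFactor.hasSignCover_of_tour {ι : Type*} [Fintype V] (F : CycleFactor G ι)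
    {x : ℕ → V} {L : ℕ} (hx : ∀ a, G.Adj (x a) (x (a + 1))) (hper : ∀ a, x (a + L) = x a)
    (hall : ∀ v, ∃ a < L, x a = v) (s : Finset ι) (hs : ∑ i ∈ s, walkSign σ (F.cyc i) = 0) :
    ∃ c, HasSignCover G σ {e | ∃ i ∈ s, e ∈ (F.cyc i).edges} c ∧
      2 * c ≤ 2 * ∑ i ∈ s, (F.cyc i).length + L := by
  classical
  set U := s.filter fun i => walkSign σ (F.cyc i) = 1 with hU
  set B := s.filter fun i => ¬ walkSign σ (F.cyc i) = 1 with hB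
  have hUB : U ∪ B = s := Finset.filter_union_filter_not_eq _ _
  have hcB := F.hasSignCover_balanced (σ := σ) B fun i hi =>
    (zmod_two_eq_zero_or_one _).resolve_right (Finset.mem_filter.1 hi).2
  have hsum : ∑ i ∈ U, (F.cyc i).length + ∑ i ∈ B, (F.cyc i).length =
      ∑ i ∈ s, (F.cyc i).length := Finset.sum_filter_add_sum_filter_not _ _ _
  have hUeven : Even U.card := by
    rw [← ZMod.natCast_eq_zero_iff_even, ← hs, Finset.card_eq_sum_ones, hU, Finset.sum_filter]
    push_cast
    refine Finset.sum_congr rfl fun i _ => ?_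
    rcases zmod_two_eq_zero_or_one (walkSign σ (F.cyc i)) with h | h <;> simp [h]
  have hτ : ∀ i, ∃ a < L, F.comp (x a) = i := fun i => by
    obtain ⟨a, ha, h⟩ := hall (F.base i)
    exact ⟨a, ha, by rw [h, F.comp_base]⟩
  choose τ hτL hτ using hτ
  have hinj : Function.Injective τ := fun i j h => by rw [← hτ i, ← hτ j, h]
  set l := (U.image τ).sort (· ≤ ·) with hl
  have hmem : ∀ a, a ∈ l ↔ ∃ i ∈ U, τ i = a := fun a => by simp [hl]
  have hlen : l.length = U.card := by
    rw [hl, Finset.length_sort, Finset.card_image_of_injective _ hinj]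
  have hnd : l.Nodup := Finset.sort_nodup _ _
  have hsort : l.Pairwise (· ≤ ·) := Finset.pairwise_sort _ _
  have hnd' : (l.map fun a => F.comp (x a)).Nodup := by
    refine List.Nodup.map_on ?_ hnd
    intro a ha b hb hab
    obtain ⟨i, -, rfl⟩ := (hmem a).1 ha
    obtain ⟨j, -, rfl⟩ := (hmem b).1 hb
    rw [hτ, hτ] at hab
    rw [hab]
  have hsign : ∀ a ∈ l, walkSign σ (F.cyc (F.comp (x a))) = 1 := by
    intro a ha
    obtain ⟨i, hi, rfl⟩ := (hmem a).1 ha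
    rw [hτ]
    exact (Finset.mem_filter.1 hi).2
  have hlsum : (l.map fun a => (F.cyc (F.comp (x a))).length).sum =
      ∑ i ∈ U, (F.cyc i).length := by
    rw [← List.sum_toFinset _ hnd, hl, Finset.sort_toFinset,
      Finset.sum_image fun i _ j _ h => hinj h]
    exact Finset.sum_congr rfl fun i _ => by rw [hτ]
  have hedges : {e | ∃ i ∈ U, e ∈ (F.cyc i).edges} ⊆
      {e | ∃ a ∈ l, e ∈ (F.cyc (F.comp (x a))).edges} := by
    rintro e ⟨i, hi, he⟩
    exact ⟨τ i, (hmem _).2 ⟨i, hi, rfl⟩, by rw [hτ]; exact he⟩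
  have hle : ∀ a ∈ l, a < L := by
    intro a ha
    obtain ⟨i, hi, rfl⟩ := (hmem a).1 ha
    exact hτL i
  have h1 := F.hasSignCover_pairGap (σ := σ) hx l hsort (hlen ▸ hUeven) hnd' hsign
  have key : ∃ g, 2 * g ≤ L ∧ HasSignCover G σ {e | ∃ i ∈ U, e ∈ (F.cyc i).edges}
      (∑ i ∈ U, (F.cyc i).length + g) := by
    rw [hlsum] at h1
    by_cases hg : 2 * pairGap l ≤ L
    · exact ⟨_, hg, h1.mono hedges le_rfl⟩
    rcases hl' : l with _ | ⟨a, m⟩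
    · simp [hl', pairGap] at hg
    rw [hl'] at hsort hle hnd' hsign hedges hlsum hg
    have hperm : (m ++ [a + L]).map (fun a => F.comp (x a)) =
        m.map (fun a => F.comp (x a)) ++ [F.comp (x a)] := by simp [hper]
    have hg' := pairGap_add_pairGap_append (a + L) m a hsort
      (fun b hb => by have := hle b hb; omega) (by rw [← hl', hlen]; exact hUeven)
    have h2 := F.hasSignCover_pairGap (σ := σ) hx (m ++ [a + L])
      (by
        rw [List.pairwise_append]
        refine ⟨(List.pairwise_cons.1 hsort).2, by simp, fun b hb c hc => ?_⟩
        have := hle b (by simp [hb])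
        simp only [List.mem_singleton] at hc
        omega)
      (by
        have : Even (a :: m).length := by rw [← hl', hlen]; exact hUeven
        simpa using this)
      (by
        rw [hperm]
        rw [List.map_cons, ← List.singleton_append] at hnd'
        exact (List.perm_append_comm.nodup_iff).1 hnd')
      (by
        intro b hb
        rcases List.mem_append.1 hb with hb | hb
        · exact hsign b (by simp [hb])
        · rw [List.mem_singleton.1 hb, hper]
          exact hsign a (by simp))
    refine ⟨pairGap (m ++ [a + L]), by omega, h2.mono (hedges.trans ?_) ?_⟩
    · rintro e ⟨b, hb, he⟩
      rcases List.mem_cons.1 hb with rfl | hb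
      · exact ⟨b + L, by simp, by rw [hper]; exact he⟩
      · exact ⟨b, by simp [hb], he⟩
    · have hxa : (F.cyc (F.comp (x (a + L)))).length = (F.cyc (F.comp (x a))).length := by
        rw [hper]
      rw [← hlsum]
      simp only [List.map_append, List.map_cons, List.sum_append, List.sum_cons, List.map_nil,
        List.sum_nil]
      omega
  obtain ⟨g, hg, h⟩ := key
  refine ⟨_, (h.union hcB).mono ?_ le_rfl, by omega⟩
  rintro e ⟨i, hi, he⟩
  rw [← hUB] at hi
  rcases Finset.mem_union.1 hi with hi | hi
  exacts [Or.inl ⟨i, hi, he⟩, Or.inr ⟨i, hi, he⟩]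

end Tours

section Distances

variable {V : Type*} {G : SimpleGraph V}

lemma SimpleGraph.Connected.exists_geodesic (hG : G.Connected) (x y : V) :
    ∃ w : G.Walk x y, w.IsPath ∧ w.length = G.dist x y := by
  obtain ⟨w, hw⟩ := hG.exists_walk_length_eq_dist x y
  exact ⟨w, w.isPath_of_length_eq_dist hw, hw⟩

lemma SimpleGraph.Walk.dist_start_getVert_le {x y : V} (w : G.Walk x y) (i : ℕ) :
    G.dist x (w.getVert i) ≤ i := by
  refine (dist_le (w.take i)).trans ?_
  rw [Walk.take_length]
  exact min_le_left _ _

lemma SimpleGraph.Walk.dist_getVert_end_le {x y : V} (w : G.Walk x y) (i : ℕ) :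
    G.dist (w.getVert i) y ≤ w.length - i := by
  refine (dist_le (w.drop i)).trans ?_
  rw [Walk.drop_length]

lemma SimpleGraph.Walk.card_image_getVert [DecidableEq V] {x y : V} {w : G.Walk x y}
    (hw : w.IsPath) (s : Finset ℕ) (hs : ∀ i ∈ s, i ≤ w.length) :
    (s.image w.getVert).card = s.card :=
  Finset.card_image_of_injOn fun _ hi _ hj h => hw.getVert_injOn (hs _ hi) (hs _ hj) h

/-- If any two of at least three classes of vertices in `C` are far apart, then two closest classes
leave much room for the others. -/
lemma CycleFactor.exists_close_pair {ι : Type*} [Fintype V] (F : CycleFactor G ι)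
    (hG : G.Connected) (C : ι → Prop) {i₁ i₂ : ι} (h₁ : C i₁) (h₂ : C i₂) (h₁₂ : i₁ ≠ i₂)
    (h3 : ∀ i j, ∃ k, C k ∧ k ≠ i ∧ k ≠ j) :
    ∃ x y, C (F.comp x) ∧ C (F.comp y) ∧ F.comp x ≠ F.comp y ∧
      3 * ((F.cyc (F.comp y)).length + G.dist x y) ≤ 2 * Fintype.card V := by
  classical
  obtain ⟨⟨x, y⟩, hxy, hmin⟩ := Finset.exists_min_image
    (Finset.univ.filter fun z : V × V => C (F.comp z.1) ∧ C (F.comp z.2) ∧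
      F.comp z.1 ≠ F.comp z.2) (fun z => G.dist z.1 z.2)
    ⟨(F.base i₁, F.base i₂), by simp [F.comp_base, h₁, h₂, h₁₂]⟩
  simp only [Finset.mem_filter, Finset.mem_univ, true_and, and_imp, Prod.forall] at hxy hmin
  obtain ⟨hx, hy, hne⟩ := hxy
  wlog hle : (F.cyc (F.comp y)).length ≤ (F.cyc (F.comp x)).length generalizing x y
  · refine this y x ?_ hy hx hne.symm (by omega)
    simpa only [dist_comm] using hmin
  refine ⟨x, y, hx, hy, hne, ?_⟩
  obtain ⟨w, hw, hwl⟩ := hG.exists_geodesic x y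
  obtain ⟨k, hk, hkx, hky⟩ := h3 (F.comp x) (F.comp y)
  obtain ⟨z, hz, hzmin⟩ := Finset.exists_min_image (Finset.univ.filter fun z => F.comp z = k)
    (fun z => G.dist z x) ⟨F.base k, by simp [F.comp_base]⟩
  simp only [Finset.mem_filter, Finset.mem_univ, true_and] at hz hzmin
  obtain ⟨q, hq, hql⟩ := hG.exists_geodesic z x
  set l := G.dist x y with hl
  have hzx : l ≤ G.dist z x := hmin z x (hz ▸ hk) hx (hz ▸ hkx)
  let cls (i : ι) : Finset V := Finset.univ.filter fun v => F.comp v = i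
  have hcls : ∀ i v, v ∈ cls i ↔ F.comp v = i := fun i v => by simp [cls]
  let W := (Finset.Ioo 0 l).image w.getVert
  let Q := (Finset.Ioo 0 ((l + 1) / 2)).image q.getVert
  have hWcard : W.card = l - 1 := by
    rw [Walk.card_image_getVert hw, Nat.card_Ioo, Nat.sub_zero]
    intro i hi
    have := Finset.mem_Ioo.1 hi
    omega
  have hQcard : Q.card = (l + 1) / 2 - 1 := by
    rw [Walk.card_image_getVert hq, Nat.card_Ioo, Nat.sub_zero]
    intro i hi
    have := Finset.mem_Ioo.1 hi
    omega
  have hd1 : Disjoint (cls (F.comp x)) (cls (F.comp y)) := by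
    rw [Finset.disjoint_left]
    intro v
    rw [hcls, hcls]
    exact fun h h' => hne (h.symm.trans h')
  have hd2 : Disjoint (cls (F.comp x) ∪ cls (F.comp y)) (cls k) := by
    rw [Finset.disjoint_left]
    intro v
    rw [Finset.mem_union, hcls, hcls, hcls]
    rintro (h | h) h'
    exacts [hkx (h'.symm.trans h), hky (h'.symm.trans h)]
  have hd3 : Disjoint (cls (F.comp x) ∪ cls (F.comp y) ∪ cls k) W := by
    rw [Finset.disjoint_left]
    intro v hv hvW
    obtain ⟨i, hi, rfl⟩ := Finset.mem_image.1 hvW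
    have hi := Finset.mem_Ioo.1 hi
    have e1 := w.dist_start_getVert_le i
    have e2 := w.dist_getVert_end_le i
    rw [Finset.mem_union, Finset.mem_union, hcls, hcls, hcls] at hv
    rcases hv with (h | h) | h
    · have := hmin (w.getVert i) y (h ▸ hx) hy (h ▸ hne)
      omega
    · have := hmin x (w.getVert i) hx (h ▸ hy) (h ▸ hne)
      omega
    · have := hmin x (w.getVert i) hx (h ▸ hk) (h ▸ hkx.symm)
      omega
  have hd4 : Disjoint (cls (F.comp x) ∪ cls (F.comp y) ∪ cls k ∪ W) Q := by
    rw [Finset.disjoint_left]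
    intro v hv hvQ
    obtain ⟨i, hi, rfl⟩ := Finset.mem_image.1 hvQ
    have hi := Finset.mem_Ioo.1 hi
    have e1 := q.dist_start_getVert_le i
    have e2 := q.dist_getVert_end_le i
    rw [Finset.mem_union, Finset.mem_union, Finset.mem_union, hcls, hcls, hcls] at hv
    rcases hv with ((h | h) | h) | h
    · have := hmin z (q.getVert i) (hz ▸ hk) (h ▸ hx) (by rw [hz, h]; exact hkx)
      omega
    · have := hmin z (q.getVert i) (hz ▸ hk) (h ▸ hy) (by rw [hz, h]; exact hky)
      omega
    · have := hzmin _ h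
      omega
    · obtain ⟨j, hj, hjv⟩ := Finset.mem_image.1 h
      have hj := Finset.mem_Ioo.1 hj
      have e3 := w.dist_start_getVert_le j
      have e4 := w.dist_getVert_end_le j
      rw [hjv] at e3 e4
      have e5 := hG.dist_triangle (u := z) (v := q.getVert i) (w := x)
      have e6 := hG.dist_triangle (u := z) (v := q.getVert i) (w := y)
      rw [dist_comm] at e3
      have := hmin z y (hz ▸ hk) hy (hz ▸ hky)
      omega
  have hcard := Finset.card_le_univ (cls (F.comp x) ∪ cls (F.comp y) ∪ cls k ∪ W ∪ Q)
  rw [Finset.card_union_of_disjoint hd4, Finset.card_union_of_disjoint hd3,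
    Finset.card_union_of_disjoint hd2, Finset.card_union_of_disjoint hd1, hWcard, hQcard,
    ← F.length_eq_card, ← F.length_eq_card, ← F.length_eq_card] at hcard
  have := (F.isCycle k).three_le_length
  omega

end Distances

section EvenCase

variable {V : Type*} {G : SimpleGraph V} {σ : Sym2 V → Bool} {c : Sym2 V → Fin 3}

open Classical in
variable (G σ c) in
/-- The total sign of the edges whose color differs from `k`. -/
noncomputable def colorSign [Fintype V] (k : Fin 3) : ZMod 2 :=
  ∑ e ∈ G.edgeFinset, if c e ≠ k then edgeSign σ e else 0

lemma colorSign_sum_eq_zero [Fintype V] :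
    colorSign G σ c 0 + colorSign G σ c 1 + colorSign G σ c 2 = 0 := by
  classical
  rw [colorSign, colorSign, colorSign, ← Finset.sum_add_distrib, ← Finset.sum_add_distrib]
  refine Finset.sum_eq_zero fun e _ => ?_
  generalize edgeSign σ e = s
  generalize c e = i
  revert s i; decide

lemma CycleFactor.sum_walkSign_eq_colorSign {ι : Type*} [Fintype V] [Fintype ι]
    (F : CycleFactor G ι) {k : Fin 3}
    (hF : ∀ i e, e ∈ (F.cyc i).edges ↔ (e ∈ G.edgeSet ∧ c e ≠ k) ∧ ∀ v ∈ e, F.comp v = i)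
    (hF' : ∀ e, e ∈ G.edgeSet → c e ≠ k → ∃ i, e ∈ (F.cyc i).edges) :
    ∑ i, walkSign σ (F.cyc i) = colorSign G σ c k := by
  classical
  rw [colorSign, ← Finset.sum_filter]
  refine F.sum_walkSign _ fun e => ?_
  simp only [Finset.mem_filter, mem_edgeFinset]
  exact ⟨fun h => hF' e h.1 h.2, fun ⟨i, hi⟩ => ((hF i e).1 hi).1⟩

/-- The bicolored cycles of a properly edge-colored cubic graph. -/
lemma Proper3EdgeColoring.exists_cycleFactor' [Finite V] (hc : Proper3EdgeColoring G c)
    (hG : IsCubic G) (k : Fin 3) :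
    ∃ F : CycleFactor G (colorDelete G c k).ConnectedComponent,
      (∀ i e, e ∈ (F.cyc i).edges ↔ (e ∈ G.edgeSet ∧ c e ≠ k) ∧ ∀ v ∈ e, F.comp v = i) ∧
      (∀ e, e ∈ G.edgeSet → c e ≠ k → ∃ i, e ∈ (F.cyc i).edges) := by
  obtain ⟨F, h1, h2⟩ := hc.exists_cycleFactor hG k
  refine ⟨F, h2, fun e he hk => ?_⟩
  induction e with
  | _ a b =>
  refine ⟨F.comp a, (h2 _ _).2 ⟨⟨he, hk⟩, fun v hv => ?_⟩⟩
  rcases Sym2.mem_iff.1 hv with rfl | rfl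
  · rfl
  · rw [h1, h1]
    exact ConnectedComponent.sound (colorDelete_adj.2 ⟨he, hk⟩).reachable.symm

lemma Proper3EdgeColoring.exists_short_tour [Fintype V] (hc : Proper3EdgeColoring G c)
    (hG : IsCubic G) (hconn : G.Connected) :
    ∃ (L : ℕ) (x : ℕ → V), 3 * L + 2 ≤ 4 * Fintype.card V ∧
      (∀ a, x (a + L) = x a) ∧ (∀ a, G.Adj (x a) (x (a + 1))) ∧ ∀ v, ∃ a < L, x a = v := by
  classical
  have hsum := hc.sum_card_components_le hG hconn
  obtain ⟨k, hk⟩ : ∃ k, 6 * Fintype.card (colorDelete G c k).ConnectedComponent ≤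
      Fintype.card V + 4 := by
    by_contra! h
    have h0 := h 0
    have h1 := h 1
    have h2 := h 2
    rw [Fin.sum_univ_three] at hsum
    omega
  obtain ⟨F, -⟩ := hc.exists_cycleFactor' hG k
  obtain ⟨L, x, h1, h2⟩ := F.exists_tour hconn
  refine ⟨L, x, ?_, h2⟩
  omega

lemma Proper3EdgeColoring.hasSignCover_of_even [Fintype V] (hc : Proper3EdgeColoring G c)
    (hG : IsCubic G) (hconn : G.Connected) (h : ∀ k, colorSign G σ c k = 0) :
    ∃ m, HasSignCover G σ G.edgeSet m ∧ 3 * m ≤ 10 * Fintype.card V := by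
  classical
  obtain ⟨L, x, hL, h1, h2, h3⟩ := hc.exists_short_tour hG hconn
  have key : ∀ k, ∃ m, HasSignCover G σ {e | e ∈ G.edgeSet ∧ c e ≠ k} m ∧
      2 * m ≤ 2 * Fintype.card V + L := by
    intro k
    obtain ⟨F, hF, hF'⟩ := hc.exists_cycleFactor' hG k
    obtain ⟨m, hm, hm'⟩ := F.hasSignCover_of_tour (σ := σ) h2 h1 h3 Finset.univ
      (by rw [F.sum_walkSign_eq_colorSign hF hF', h])
    rw [F.sum_length] at hm'
    refine ⟨m, hm.mono ?_ le_rfl, hm'⟩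
    rintro e ⟨he, hk⟩
    obtain ⟨i, hi⟩ := hF' e he hk
    exact ⟨i, Finset.mem_univ _, hi⟩
  obtain ⟨m₀, hm₀, hm₀'⟩ := key 0
  obtain ⟨m₁, hm₁, hm₁'⟩ := key 1
  refine ⟨m₀ + m₁, (hm₀.union hm₁).mono (fun e he => ?_) le_rfl, by omega⟩
  by_cases h0 : c e = 0
  · exact Or.inr ⟨he, by rw [h0]; decide⟩
  · exact Or.inl ⟨he, h0⟩

end EvenCase

section Kempe

variable {V : Type*} {G : SimpleGraph V} {σ : Sym2 V → Bool} {c : Sym2 V → Fin 3}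

lemma exists_third_of_sum_eq_one {ι : Type*} [Fintype ι] (f : ι → ZMod 2) (hf : ∑ i, f i = 1)
    {a b : ι} (ha : f a = 1) (hb : f b = 1) (hab : a ≠ b) (i j : ι) :
    ∃ k, f k = 1 ∧ k ≠ i ∧ k ≠ j := by
  classical
  by_contra! h
  have h1 : (Finset.univ.filter fun k => f k = 1) ⊆ {i, j} := fun k hk => by
    rw [Finset.mem_insert, Finset.mem_singleton]
    by_cases hki : k = i
    exacts [Or.inl hki, Or.inr (h k (Finset.mem_filter.1 hk).2 hki)]
  have h2 : {a, b} ⊆ (Finset.univ.filter fun k => f k = 1) := fun k hk => by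
    rcases Finset.mem_insert.1 hk with rfl | hk
    · simpa using ha
    · simpa [Finset.mem_singleton.1 hk] using hb
  have h3 := (Finset.card_le_card h1).trans Finset.card_le_two
  have h4 := Finset.card_le_card h2
  rw [Finset.card_pair hab] at h4
  have h5 : ((Finset.univ.filter fun k => f k = 1).card : ZMod 2) = 1 := by
    refine Eq.trans ?_ hf
    rw [Finset.card_eq_sum_ones, Finset.sum_filter]
    push_cast
    refine Finset.sum_congr rfl fun i _ => ?_
    rcases zmod_two_eq_zero_or_one (f i) with h | h <;> simp [h]
  rw [le_antisymm h3 h4] at h5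
  exact absurd h5 (by decide)

/-- Recoloring along an unbalanced bicolored cycle flips the two other color signs. -/
lemma Proper3EdgeColoring.exists_kempe_swap [Fintype V] (hc : Proper3EdgeColoring G c)
    {ι : Type*} (F : CycleFactor G ι) {i j k : Fin 3} (hij : i ≠ j) (hik : i ≠ k) (hjk : j ≠ k)
    (hF : ∀ x e, e ∈ (F.cyc x).edges ↔ (e ∈ G.edgeSet ∧ c e ≠ k) ∧ ∀ v ∈ e, F.comp v = x)
    (hF' : ∀ e, e ∈ G.edgeSet → c e ≠ k → ∃ x, e ∈ (F.cyc x).edges)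
    (X : ι) (hX : walkSign σ (F.cyc X) = 1) :
    ∃ c', Proper3EdgeColoring G c' ∧ colorSign G σ c' k = colorSign G σ c k ∧
      colorSign G σ c' i = colorSign G σ c i + 1 ∧
      colorSign G σ c' j = colorSign G σ c j + 1 := by
  classical
  let c' : Sym2 V → Fin 3 := fun e =>
    if e ∈ (F.cyc X).edges then Equiv.swap i j (c e) else c e
  have hin : ∀ e, e ∈ (F.cyc X).edges → c' e = Equiv.swap i j (c e) := fun e h => if_pos h
  have hout : ∀ e, e ∉ (F.cyc X).edges → c' e = c e := fun e h => if_neg h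
  have hXk : ∀ e, e ∈ (F.cyc X).edges → c e ≠ k := fun e h => ((hF X e).1 h).1.2
  have hsw : ∀ l, l ≠ k → Equiv.swap i j l ≠ k := by
    revert hij hik hjk; clear * -; revert i j k; decide
  have hmix : ∀ e f, f ∈ G.edgeSet → e ∈ (F.cyc X).edges → f ∉ (F.cyc X).edges →
      (∃ x, x ∈ e ∧ x ∈ f) → c' e ≠ c' f := by
    rintro e f hf he hf' ⟨x, hxe, hxf⟩
    have hfk : c f = k := by
      by_contra hfk
      obtain ⟨Y, hY⟩ := hF' f hf hfk
      rw [← F.comp_eq_of_mem_edges hY hxf, F.comp_eq_of_mem_edges he hxe] at hY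
      exact hf' hY
    rw [hin e he, hout f hf', hfk]
    exact hsw _ (hXk e he)
  have hflip : ∀ m, m = i ∨ m = j → colorSign G σ c' m + colorSign G σ c m = 1 := by
    intro m hm
    rw [colorSign, colorSign, ← Finset.sum_add_distrib, ← hX, walkSign,
      ← List.sum_toFinset _ (F.isCycle X).edges_nodup]
    rw [← Finset.sum_subset (s₁ := (F.cyc X).edges.toFinset)]
    · refine Finset.sum_congr rfl fun e he => ?_
      rw [List.mem_toFinset] at he
      have h1 := hXk e he
      rw [hin e he]
      generalize edgeSign σ e = s
      generalize c e = l at h1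
      revert hij hik hjk h1 hm; clear * -; revert i j k l m s; decide
    · intro e he
      exact mem_edgeFinset.2 (Walk.edges_subset_edgeSet _ (List.mem_toFinset.1 he))
    · intro e _ he
      rw [hout e (by simpa using he)]
      exact CharTwo.add_self_eq_zero _
  refine ⟨c', ?_, ?_, ?_, ?_⟩
  · intro e he f hf hne hx
    by_cases h1 : e ∈ (F.cyc X).edges <;> by_cases h2 : f ∈ (F.cyc X).edges
    · rw [hin e h1, hin f h2]
      exact fun h => hc e he f hf hne hx ((Equiv.swap i j).injective h)
    · exact hmix e f hf h1 h2 hx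
    · exact (hmix f e he h2 h1 (hx.imp fun _ h => h.symm)).symm
    · rw [hout e h1, hout f h2]
      exact hc e he f hf hne hx
  · rw [colorSign, colorSign]
    refine Finset.sum_congr rfl fun e _ => ?_
    by_cases h1 : e ∈ (F.cyc X).edges
    · rw [hin e h1, if_pos (hsw _ (hXk e h1)), if_pos (hXk e h1)]
    · rw [hout e h1]
  · have h := hflip i (Or.inl rfl)
    revert h
    generalize colorSign G σ c' i = s, colorSign G σ c i = t
    revert s t; decide
  · have h := hflip j (Or.inr rfl)
    revert h
    generalize colorSign G σ c' j = s, colorSign G σ c j = t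
    revert s t; decide

lemma Proper3EdgeColoring.hasSignCover_of_cycle_bound [Fintype V]
    (hc : Proper3EdgeColoring G c) (hG : IsCubic G) (hconn : G.Connected)
    (hD : ∀ r, ∀ p : G.Walk r r, p.IsCycle → walkSign σ p = 1 →
      ∃ m, HasSignCover G σ {e | e ∈ p.edges} m ∧ 3 * m ≤ 4 * Fintype.card V + 3 * p.length) :
    ∃ m, HasSignCover G σ G.edgeSet m ∧ 3 * m ≤ 10 * Fintype.card V := by
  classical
  by_cases heven : ∀ k, colorSign G σ c k = 0
  · exact hc.hasSignCover_of_even hG hconn heven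
  obtain ⟨i, j, k, hij, hik, hjk, hi, hj, hk⟩ : ∃ i j k : Fin 3, i ≠ j ∧ i ≠ k ∧ j ≠ k ∧
      colorSign G σ c i = 1 ∧ colorSign G σ c j = 1 ∧ colorSign G σ c k = 0 := by
    have hs := colorSign_sum_eq_zero (G := G) (σ := σ) (c := c)
    revert hs heven
    generalize colorSign G σ c = ρ
    revert ρ; decide
  obtain ⟨F, hF, hF'⟩ := hc.exists_cycleFactor' hG k
  by_cases hX : ∃ X, walkSign σ (F.cyc X) = 1
  · obtain ⟨X, hX⟩ := hX
    obtain ⟨c', hc', h1, h2, h3⟩ := hc.exists_kempe_swap F hij hik hjk hF hF' X hX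
    refine hc'.hasSignCover_of_even hG hconn fun l => ?_
    rw [hi] at h2
    rw [hj] at h3
    rw [hk] at h1
    have : l = i ∨ l = j ∨ l = k := by
      revert hij hik hjk; clear * -; revert i j k l; decide
    rcases this with rfl | rfl | rfl
    · rw [h2]; decide
    · rw [h3]; decide
    · exact h1
  have hcovk := F.hasSignCover_balanced (σ := σ) Finset.univ fun X _ =>
    (zmod_two_eq_zero_or_one _).resolve_right fun h => hX ⟨X, h⟩
  rw [F.sum_length] at hcovk
  obtain ⟨E, hE, hE'⟩ := hc.exists_cycleFactor' hG j
  have hEsum := E.sum_walkSign_eq_colorSign (σ := σ) hE hE'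
  rw [hj] at hEsum
  have herase : ∀ D, walkSign σ (E.cyc D) = 1 →
      ∑ X ∈ Finset.univ.erase D, walkSign σ (E.cyc X) = 0 := by
    intro D hD
    have := Finset.add_sum_erase Finset.univ (fun X => walkSign σ (E.cyc X)) (Finset.mem_univ D)
    rw [hEsum, hD] at this
    exact add_eq_left.1 this
  have hlen : ∀ D, (E.cyc D).length + ∑ X ∈ Finset.univ.erase D, (E.cyc X).length =
      Fintype.card V := by
    intro D
    rw [← E.sum_length]
    exact Finset.add_sum_erase Finset.univ (fun X => (E.cyc X).length) (Finset.mem_univ D)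
  have hcombine : ∀ D a b, HasSignCover G σ {e | ∃ X ∈ Finset.univ.erase D, e ∈ (E.cyc X).edges} a →
      HasSignCover G σ {e | e ∈ (E.cyc D).edges} b →
      HasSignCover G σ G.edgeSet (Fintype.card V + a + b) := by
    intro D a b ha hb
    refine ((hcovk.union ha).union hb).mono (fun e he => ?_) le_rfl
    by_cases hek : c e = k
    · obtain ⟨X, hX⟩ := hE' e he (by rw [hek]; exact hjk.symm)
      by_cases hXD : X = D
      · subst hXD; exact Or.inr hX
      · exact Or.inl (Or.inr ⟨X, Finset.mem_erase.2 ⟨hXD, Finset.mem_univ _⟩, hX⟩)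
    · obtain ⟨X, hX⟩ := hF' e he hek
      exact Or.inl (Or.inl ⟨X, Finset.mem_univ _, hX⟩)
  obtain ⟨D, hDs⟩ : ∃ D, walkSign σ (E.cyc D) = 1 := by
    by_contra! h
    rw [Finset.sum_eq_zero fun X _ => (zmod_two_eq_zero_or_one _).resolve_right (h X)] at hEsum
    exact absurd hEsum (by decide)
  by_cases hU : ∃ U, U ≠ D ∧ walkSign σ (E.cyc U) = 1
  · obtain ⟨U, hUD, hUs⟩ := hU
    obtain ⟨x, y, hx, hy, hxy, hlt⟩ := E.exists_close_pair hconn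
      (fun X => walkSign σ (E.cyc X) = 1) hDs hUs hUD.symm
      (exists_third_of_sum_eq_one _ hEsum hDs hUs hUD.symm)
    obtain ⟨L, t, hL, h1, h2, h3⟩ := hc.exists_short_tour hG hconn
    obtain ⟨a, ha, ha'⟩ := E.hasSignCover_of_tour (σ := σ) h2 h1 h3 _ (herase (E.comp x) hx)
    obtain ⟨w, -, hw⟩ := hconn.exists_geodesic x y
    have hb := HasSignCover.of_disjoint_unbalanced (E.isCycle _) (E.isCycle _) hx hy
      (E.disjoint_support hxy) w ((E.mem_support _ _).2 rfl) ((E.mem_support _ _).2 rfl)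
    refine ⟨_, hcombine (E.comp x) a _ ha (hb.mono (fun e he => Or.inl he) (min_le_left _ _)), ?_⟩
    have := hlen (E.comp x)
    omega
  · have ha := E.hasSignCover_balanced (σ := σ) (Finset.univ.erase D) fun X hX =>
      (zmod_two_eq_zero_or_one _).resolve_right fun h => hU ⟨X, (Finset.mem_erase.1 hX).1, h⟩
    obtain ⟨b, hb, hb'⟩ := hD _ _ (E.isCycle D) hDs
    refine ⟨_, hcombine D _ b ha hb, ?_⟩
    have := hlen D
    omega

end Kempe

section Potentials

variable {V : Type*} {G : SimpleGraph V} {σ : Sym2 V → Bool}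

lemma walkSign_bypass [DecidableEq V]
    (h : ∀ r, ∀ q : G.Walk r r, q.IsCycle → walkSign σ q = 0) {u v : V} (w : G.Walk u v) :
    walkSign σ w.bypass = walkSign σ w := by
  induction w with
  | nil => rfl
  | @cons u v' v ha p ih =>
    rw [Walk.bypass]
    split_ifs with hs
    · have hsplit := congrArg (walkSign σ) (Walk.take_spec p.bypass hs)
      rw [walkSign_append, ih] at hsplit
      have hpath : (p.bypass.takeUntil u hs).IsPath := (Walk.bypass_isPath p).takeUntil hs
      have htake : walkSign σ (p.bypass.takeUntil u hs) = edgeSign σ s(u, v') := by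
        by_cases he : s(u, v') ∈ (p.bypass.takeUntil u hs).edges
        · have hl := hpath.length_eq_one_of_mem_edges (by rwa [Sym2.eq_swap])
          generalize (p.bypass.takeUntil u hs) = q at hl
          cases q with
          | nil => simp at hl
          | cons h' q' =>
            cases q' with
            | nil => simp [Sym2.eq_swap]
            | cons _ _ => simp at hl
        · have := h _ _ ((Walk.cons_isCycle_iff _ ha).2 ⟨hpath, he⟩)
          rw [walkSign_cons] at this
          grind
      rw [walkSign_cons, ← hsplit, htake]
      have h2 : ∀ z : ZMod 2, z + z = 0 := by decide
      grind
    · rw [walkSign_cons, walkSign_cons, ih]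

lemma walkSign_eq_zero_of_closed
    (h : ∀ r, ∀ q : G.Walk r r, q.IsCycle → walkSign σ q = 0) {u : V} (w : G.Walk u u) :
    walkSign σ w = 0 := by
  classical
  rw [← walkSign_bypass h, (Walk.isPath_iff_nil.1 (Walk.bypass_isPath w)).eq_nil, walkSign_nil]

lemma exists_potential (h : ∀ r, ∀ q : G.Walk r r, q.IsCycle → walkSign σ q = 0) :
    ∃ g : V → ZMod 2, ∀ u v, G.Adj u v → edgeSign σ s(u, v) = g u + g v := by
  have hr : ∀ v, G.Reachable (Quot.out (G.connectedComponentMk v)) v := fun v =>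
    ConnectedComponent.exact (Quot.out_eq _)
  refine ⟨fun v => walkSign σ (hr v).some, fun u v huv => ?_⟩
  have hcomp : G.connectedComponentMk u = G.connectedComponentMk v :=
    ConnectedComponent.sound huv.reachable
  have hbase : (Quot.out (G.connectedComponentMk u)) = Quot.out (G.connectedComponentMk v) := by
    rw [hcomp]
  have hz : ∀ (a b : V) (p : G.Walk a u) (q : G.Walk b v), a = b →
      edgeSign σ s(u, v) = walkSign σ p + walkSign σ q := by
    rintro a b p q rfl
    have := walkSign_eq_zero_of_closed h (p.append (Walk.cons huv q.reverse))
    rw [walkSign_append, walkSign_cons, walkSign_reverse] at this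
    have h2 : ∀ x y z : ZMod 2, x + (y + z) = 0 → y = x + z := by decide
    exact h2 _ _ _ this
  exact hz _ _ _ _ hbase

lemma SimpleGraph.Walk.IsPath.isCycle_append_of_edges_disjoint {u v : V} {p : G.Walk u v}
    {q : G.Walk v u} (hp : p.IsPath)
    (hq : q.IsPath) (huv : u ≠ v) (hpq : ∀ z ∈ p.support, z ∈ q.support → z = u ∨ z = v)
    (he : p.edges.Disjoint q.edges) : (p.append q).IsCycle := by
  rw [Walk.isCycle_def, Walk.isTrail_def, Walk.edges_append, Walk.tail_support_append]
  refine ⟨List.nodup_append'.2 ⟨hp.isTrail.edges_nodup, hq.isTrail.edges_nodup, he⟩, ?_, ?_⟩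
  · intro h
    have := congrArg Walk.length h
    rw [Walk.length_append, Walk.length_nil] at this
    exact huv (Walk.eq_of_length_eq_zero (p := p) (by omega))
  · have hp' := hp.support_nodup
    have hq' := hq.support_nodup
    rw [← Walk.cons_tail_support] at hp' hq'
    refine List.nodup_append'.2 ⟨(List.nodup_cons.1 hp').2, (List.nodup_cons.1 hq').2, ?_⟩
    intro z hz1 hz2
    rcases hpq z (List.mem_of_mem_tail hz1) (List.mem_of_mem_tail hz2) with rfl | rfl
    · exact (List.nodup_cons.1 hp').1 hz1
    · exact (List.nodup_cons.1 hq').1 hz2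

end Potentials

section PeriodicCycles

variable {V : Type*} {G : SimpleGraph V} {σ : Sym2 V → Bool}

variable (G) in
/-- A cycle of length `d`, presented as a `d`-periodic sequence of vertices. -/
structure PeriodicCycle (x : ℕ → V) (d : ℕ) : Prop where
  three_le : 3 ≤ d
  periodic : ∀ a, x (a + d) = x a
  adj : ∀ a, G.Adj (x a) (x (a + 1))
  inj : ∀ a b, x a = x b → a % d = b % d

lemma SimpleGraph.Walk.IsCycle.exists_periodicCycle {r : V} {p : G.Walk r r} (hp : p.IsCycle) :
    ∃ x : ℕ → V, PeriodicCycle G x p.length ∧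
      p.edges = (List.range p.length).map fun k => s(x k, x (k + 1)) := by
  have h3 := hp.three_le_length
  have key : ∀ k, p.getVert ((k + 1) % p.length) = p.getVert (k % p.length + 1) := by
    intro k
    have := Nat.mod_lt k (show 0 < p.length by omega)
    rw [Nat.add_mod, Nat.mod_eq_of_lt (show 1 < p.length by omega)]
    rcases (show k % p.length + 1 < p.length ∨ k % p.length + 1 = p.length by omega) with h | h
    · rw [Nat.mod_eq_of_lt h]
    · rw [h, Nat.mod_self, Walk.getVert_zero, Walk.getVert_length]
  refine ⟨fun k => p.getVert (k % p.length), ⟨h3, fun a => by simp, fun a => ?_, fun a b h => ?_⟩,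
    ?_⟩
  · simp only [key]
    exact p.adj_getVert_succ (Nat.mod_lt a (by omega))
  · have ha := Nat.mod_lt a (show 0 < p.length by omega)
    have hb := Nat.mod_lt b (show 0 < p.length by omega)
    exact hp.getVert_injOn' (by simp; omega) (by simp; omega) h
  · refine List.ext_getElem (by simp) fun i h₁ h₂ => ?_
    rw [Walk.getElem_edges, List.getElem_map, List.getElem_range]
    rw [Walk.length_edges] at h₁
    simp only [key, Nat.mod_eq_of_lt h₁]

variable (G) in
/-- The graph obtained from `G` by deleting the edges of the closed sequence `x`. -/
def offCycle (x : ℕ → V) : SimpleGraph V := G.deleteEdges {e | ∃ k, e = s(x k, x (k + 1))}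

lemma offCycle_le (x : ℕ → V) : offCycle G x ≤ G := deleteEdges_le _

lemma offCycle_adj {x : ℕ → V} {u v : V} :
    (offCycle G x).Adj u v ↔ G.Adj u v ∧ ∀ k, s(u, v) ≠ s(x k, x (k + 1)) := by
  simp [offCycle, deleteEdges_adj]

namespace PeriodicCycle

variable {x : ℕ → V} {d : ℕ}

lemma apply_add_mul (hx : PeriodicCycle G x d) (a m : ℕ) : x (a + m * d) = x a := by
  induction m with
  | zero => simp
  | succ m ih => rw [Nat.succ_mul, ← Nat.add_assoc, hx.periodic, ih]

lemma eq_of_apply_eq (hx : PeriodicCycle G x d) {a b : ℕ} (h : x a = x b) (hab : a < b + d)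
    (hba : b < a + d) : a = b := by
  have h1 := hx.inj a b h
  have h2 := Nat.sub_mod_eq_zero_of_mod_eq h1
  have h3 := Nat.sub_mod_eq_zero_of_mod_eq h1.symm
  rw [Nat.mod_eq_of_lt (by have := hx.three_le; omega)] at h2 h3
  omega

lemma adj_unique (hx : PeriodicCycle G x d) (hG : IsCubic G) {k : ℕ} {u v : V}
    (hu : (offCycle G x).Adj (x k) u) (hv : (offCycle G x).Adj (x k) v) : u = v := by
  by_contra huv
  have h3 := hx.three_le
  rw [offCycle_adj] at hu hv
  obtain ⟨e, rfl⟩ : ∃ e, d = e + 1 := ⟨d - 1, by omega⟩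
  have hprev : x (k + e + 1) = x k := hx.periodic k
  have hadj := hx.adj (k + e)
  rw [hprev] at hadj
  have hne : x (k + 1) ≠ x (k + e) := fun h => by
    have := hx.eq_of_apply_eq h (by omega) (by omega)
    omega
  have hnext : ∀ w, (∀ j, s(x k, w) ≠ s(x j, x (j + 1))) → w ≠ x (k + 1) ∧ w ≠ x (k + e) := by
    refine fun w hw => ⟨fun h => hw k (by rw [h]), fun h => hw (k + e) ?_⟩
    rw [hprev, h, Sym2.eq_swap]
  have hsub : ({u, v, x (k + 1), x (k + e)} : Set V) ⊆ G.neighborSet (x k) := by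
    rintro z (rfl | rfl | rfl | rfl)
    exacts [hu.1, hv.1, hx.adj k, hadj.symm]
  have hcard := Set.ncard_le_ncard hsub (Set.finite_of_ncard_ne_zero (by rw [hG]; decide))
  rw [hG, Set.ncard_insert_of_notMem, Set.ncard_insert_of_notMem, Set.ncard_pair hne] at hcard
  · omega
  · simp [hnext v hv.2]
  · simp [hnext u hu.2, huv]

lemma eq_end_of_mem_support (hx : PeriodicCycle G x d) (hG : IsCubic G) {u v : V}
    {w : (offCycle G x).Walk u v} (hw : w.IsPath) {k : ℕ} (hk : x k ∈ w.support) :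
    x k = u ∨ x k = v := by
  obtain ⟨i, hi, hil⟩ := Walk.mem_support_iff_exists_getVert.1 hk
  by_contra! hne
  have h0 : i ≠ 0 := by
    rintro rfl
    exact hne.1 (by rw [← hi, Walk.getVert_zero])
  have h1 : i ≠ w.length := by
    rintro rfl
    exact hne.2 (by rw [← hi, Walk.getVert_length])
  obtain ⟨j, rfl⟩ := Nat.exists_eq_succ_of_ne_zero h0
  have ha := w.adj_getVert_succ (i := j) (by omega)
  have hb := w.adj_getVert_succ (i := j + 1) (by omega)
  rw [Nat.succ_eq_add_one] at hi
  rw [hi] at ha hb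
  have := hw.getVert_injOn (by simp; omega) (by simp; omega) (hx.adj_unique hG ha.symm hb)
  omega

lemma notMem_support_of_isCycle (hx : PeriodicCycle G x d) (hG : IsCubic G) {r : V}
    {q : (offCycle G x).Walk r r} (hq : q.IsCycle) (k : ℕ) : x k ∉ q.support := by
  intro hk
  have h2 := hq.ncard_neighborSet_toSubgraph_eq_two hk
  obtain ⟨u, v, huv, hs⟩ := Set.ncard_eq_two.1 h2
  have hu : u ∈ q.toSubgraph.neighborSet (x k) := by rw [hs]; simp
  have hv : v ∈ q.toSubgraph.neighborSet (x k) := by rw [hs]; simp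
  exact huv (hx.adj_unique hG (Subgraph.Adj.adj_sub hu) (Subgraph.Adj.adj_sub hv))

lemma exists_arc (hx : PeriodicCycle G x d) (a m : ℕ) : ∃ w : G.Walk (x a) (x (a + m)),
    w.support = (List.range' a (m + 1)).map x ∧
      w.edges = (List.range' a m).map fun k => s(x k, x (k + 1)) := by
  induction m generalizing a with
  | zero => exact ⟨Walk.nil, by simp, by simp⟩
  | succ m ih =>
    have h := ih (a + 1)
    rw [show a + 1 + m = a + (m + 1) by omega] at h
    obtain ⟨w, hs, he⟩ := h
    refine ⟨Walk.cons (hx.adj a) w, ?_, ?_⟩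
    · rw [Walk.support_cons, hs, List.range'_succ (s := a), List.map_cons]
    · rw [Walk.edges_cons, he, List.range'_succ (s := a), List.map_cons]

lemma isPath_of_support_eq (hx : PeriodicCycle G x d) {a m : ℕ} (hm : m < d)
    {w : G.Walk (x a) (x (a + m))} (hw : w.support = (List.range' a (m + 1)).map x) :
    w.IsPath := by
  rw [Walk.isPath_def, hw]
  refine List.Nodup.map_on ?_ List.nodup_range'
  intro i hi j hj hij
  simp only [List.mem_range'_1] at hi hj
  exact hx.eq_of_apply_eq hij (by omega) (by omega)

end PeriodicCycle

end PeriodicCycles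

section Arcs

variable {V : Type*} {G : SimpleGraph V} {σ : Sym2 V → Bool} {g : V → ZMod 2} {x : ℕ → V} {d : ℕ}

/-- The partial sums of the signs along the sequence `x`, after switching by `g`. -/
def switchedSum (σ : Sym2 V → Bool) (g : V → ZMod 2) (x : ℕ → V) (k : ℕ) : ZMod 2 :=
  ∑ i ∈ Finset.range k, (edgeSign σ s(x i, x (i + 1)) + g (x i) + g (x (i + 1)))

lemma switchedSum_succ (k : ℕ) : switchedSum σ g x (k + 1) =
    switchedSum σ g x k + (edgeSign σ s(x k, x (k + 1)) + g (x k) + g (x (k + 1))) :=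
  Finset.sum_range_succ _ _

lemma sum_edgeSign_range' (a m : ℕ) :
    (((List.range' a m).map fun k => s(x k, x (k + 1))).map (edgeSign σ)).sum =
      switchedSum σ g x a + switchedSum σ g x (a + m) + g (x a) + g (x (a + m)) := by
  have h2 : ∀ z : ZMod 2, z + z = 0 := by decide
  induction m with
  | zero =>
    simp only [List.range'_zero, List.map_nil, List.sum_nil, Nat.add_zero, add_assoc, h2]
  | succ m ih =>
    rw [List.range'_1_concat, List.map_append, List.map_append, List.sum_append, ih]
    rw [← Nat.add_assoc, switchedSum_succ]
    simp only [List.map_cons, List.map_nil, List.sum_cons, List.sum_nil]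
    generalize switchedSum σ g x a = p
    generalize switchedSum σ g x (a + m) = q
    generalize edgeSign σ s(x (a + m), x (a + m + 1)) = r
    generalize g (x a) = s, g (x (a + m)) = t, g (x (a + m + 1)) = u
    revert p q r s t u
    decide

namespace PeriodicCycle

lemma switchedSum_add (hx : PeriodicCycle G x d)
    (hsum : (((List.range d).map fun k => s(x k, x (k + 1))).map (edgeSign σ)).sum = 1) (k : ℕ) :
    switchedSum σ g x (k + d) = switchedSum σ g x k + 1 := by
  induction k with
  | zero =>
    rw [List.range_eq_range', sum_edgeSign_range' (g := g), hx.periodic] at hsum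
    have h0 : switchedSum σ g x 0 = 0 := rfl
    rw [h0] at hsum ⊢
    revert hsum
    generalize switchedSum σ g x (0 + d) = p
    generalize g (x 0) = q
    revert p q
    decide
  | succ k ih =>
    rw [show k + 1 + d = k + d + 1 by omega, switchedSum_succ, switchedSum_succ, ih, hx.periodic,
      show k + d + 1 = k + 1 + d by omega, hx.periodic]
    ring

lemma hasSignCover_arc (hx : PeriodicCycle G x d) (hG : IsCubic G)
    (hg : ∀ u v, (offCycle G x).Adj u v → edgeSign σ s(u, v) = g u + g v) {a b : ℕ}
    (hab : a < b) (hba : b < a + d) (hS : switchedSum σ g x a = switchedSum σ g x b)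
    (w : (offCycle G x).Walk (x a) (x b)) :
    HasSignCover G σ {e | ∃ k, a ≤ k ∧ k < b ∧ e = s(x k, x (k + 1))} (b - a + w.length) := by
  classical
  obtain ⟨m, rfl⟩ : ∃ m, b = a + (m + 1) := ⟨b - a - 1, by omega⟩
  obtain ⟨A, hAs, hAe⟩ := hx.exists_arc a (m + 1)
  have hA : A.IsPath := hx.isPath_of_support_eq (by omega) hAs
  have hsign : ∀ {u v : V} (q : (offCycle G x).Walk u v),
      walkSign σ (q.mapLe (offCycle_le x)) = g u + g v := by
    have h2 : ∀ z : ZMod 2, z + z = 0 := by decide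
    intro u v q
    induction q with
    | nil => simp [h2]
    | @cons u v' v h p ih =>
      have : (Walk.cons h p).mapLe (offCycle_le x) =
        Walk.cons (offCycle_le x h) (p.mapLe (offCycle_le x)) := rfl
      rw [this, walkSign_cons, ih, hg _ _ h, add_assoc, ← add_assoc (g v'), h2, zero_add]
  have hB : (w.bypass.mapLe (offCycle_le x)).reverse.IsPath :=
    ((Walk.bypass_isPath w).mapLe _).reverse
  have hne : x a ≠ x (a + (m + 1)) := fun h => by
    have := hx.eq_of_apply_eq h (by omega) (by omega)
    omega
  have hcyc : (A.append (w.bypass.mapLe (offCycle_le x)).reverse).IsCycle := by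
    refine hA.isCycle_append_of_edges_disjoint hB hne ?_ ?_
    · intro z hz hz'
      rw [hAs, List.mem_map] at hz
      obtain ⟨k, -, rfl⟩ := hz
      refine hx.eq_end_of_mem_support hG (Walk.bypass_isPath w) ?_
      simpa using hz'
    · intro e he he'
      rw [hAe, List.mem_map] at he
      obtain ⟨k, -, rfl⟩ := he
      rw [Walk.edges_reverse, List.mem_reverse, Walk.edges_mapLe_eq_edges] at he'
      exact (offCycle_adj.1 (Walk.adj_of_mem_edges _ he')).2 k rfl
  refine (HasSignCover.of_balanced_cycle hcyc ?_).mono ?_ ?_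
  · rw [walkSign_append, walkSign_reverse, hsign, walkSign, hAe, sum_edgeSign_range' (g := g), hS]
    generalize switchedSum σ g x (a + (m + 1)) = p
    generalize g (x a) = q, g (x (a + (m + 1))) = r
    revert p q r
    decide
  · rintro e ⟨k, hak, hkb, rfl⟩
    refine (Walk.edges_append _ _) ▸ List.mem_append_left _ ?_
    rw [hAe, List.mem_map]
    exact ⟨k, by rw [List.mem_range'_1]; omega, rfl⟩
  · have h1 : A.length = m + 1 := by
      rw [← Walk.length_edges, hAe]
      simp
    have h2 := w.length_bypass_le_length
    rw [Walk.length_append, Walk.length_reverse, Walk.length_mapLe, h1]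
    omega

end PeriodicCycle

end Arcs

section GoodArcs

variable {V : Type*} {G : SimpleGraph V} {σ : Sym2 V → Bool} {g : V → ZMod 2} {x : ℕ → V} {d : ℕ}

variable (G σ) in
/-- No switching of the signature leaves exactly one negative edge. -/
def NoSingleNegative : Prop :=
  ∀ e ∈ G.edgeSet, ∀ g : V → ZMod 2,
    ¬ ∀ u v, G.Adj u v → (edgeSign σ s(u, v) = g u + g v ↔ s(u, v) ≠ e)

variable (G σ g x d) in
/-- The arc of the closed sequence `x` from position `a` to position `b` can be closed up outside
the sequence to a balanced circuit. -/
structure GoodArc (a b : ℕ) : Prop where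
  lt : a < b
  lt_add : b < a + d
  comp_eq : (offCycle G x).connectedComponentMk (x a) = (offCycle G x).connectedComponentMk (x b)
  sum_eq : switchedSum σ g x a = switchedSum σ g x b

namespace PeriodicCycle

lemma eq_of_edge_eq (hx : PeriodicCycle G x d) {i j : ℕ}
    (h : s(x i, x (i + 1)) = s(x j, x (j + 1))) (hij : i < j + d) (hji : j < i + d) : i = j := by
  have h3 := hx.three_le
  rcases Sym2.eq_iff.1 h with ⟨h1, -⟩ | ⟨h1, h2⟩
  · exact hx.eq_of_apply_eq h1 hij hji
  · exfalso
    rcases le_total i j with hle | hle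
    · by_cases hc : j + 1 < i + d
      · have := hx.eq_of_apply_eq h1 (by omega) hc
        omega
      · have := hx.eq_of_apply_eq h2 (by omega) (by omega)
        omega
    · by_cases hc : i + 1 < j + d
      · have := hx.eq_of_apply_eq h2 (by omega) (by omega)
        omega
      · have := hx.eq_of_apply_eq h1 (by omega) (by omega)
        omega

lemma exists_mem_window (hx : PeriodicCycle G x d) (t k : ℕ) :
    ∃ i, t < i ∧ i ≤ t + d ∧ x k = x i ∧ x (k + 1) = x (i + 1) := by
  have h3 := hx.three_le
  have hle : (t + 1) * 1 ≤ (t + 1) * d := Nat.mul_le_mul_left _ (by omega)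
  set y := k + (t + 1) * d - (t + 1) with hy
  have hmod := Nat.mod_lt y (show 0 < d by omega)
  have hdiv := Nat.mod_add_div y d
  refine ⟨t + 1 + y % d, by omega, by omega, ?_, ?_⟩
  · rw [← hx.apply_add_mul k (t + 1), ← hx.apply_add_mul (t + 1 + y % d) (y / d)]
    congr 1
    rw [mul_comm (y / d)]
    omega
  · rw [← hx.apply_add_mul (k + 1) (t + 1), ← hx.apply_add_mul (t + 1 + y % d + 1) (y / d)]
    congr 1
    rw [mul_comm (y / d)]
    omega

lemma exists_goodArc (hx : PeriodicCycle G x d)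
    (hS : ∀ k, switchedSum σ g x (k + d) = switchedSum σ g x k + 1)
    (hg : ∀ u v, (offCycle G x).Adj u v → edgeSign σ s(u, v) = g u + g v)
    (hns : NoSingleNegative G σ) (t : ℕ) :
    ∃ a b, GoodArc G σ g x d a b ∧ a ≤ t + d ∧ t + d < b := by
  classical
  by_contra! hno
  have h3 := hx.three_le
  set S := switchedSum σ g x with hSdef
  set cl := fun k => (offCycle G x).connectedComponentMk (x k) with hcl
  have hlt : ∀ i j, t < i → i < j → j ≤ t + d → cl i = cl j → S i = S j := by
    intro i j hi hij hj hc
    by_contra hne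
    have := hno j (i + d) ⟨by omega, by omega, by rw [hx.periodic]; exact hc.symm, ?_⟩ (by omega)
    · omega
    · rw [← hSdef, hS]
      revert hne
      generalize S i = p
      generalize S j = q
      revert p q
      decide
  have hconst : ∀ i j, t < i → i ≤ t + d → t < j → j ≤ t + d → cl i = cl j → S i = S j := by
    intro i j hi hi' hj hj' hc
    rcases lt_trichotomy i j with h | rfl | h
    · exact hlt i j hi h hj' hc
    · rfl
    · exact (hlt j i hj h hi' hc.symm).symm
  set φ : (offCycle G x).ConnectedComponent → ZMod 2 := fun C =>
    if h : ∃ i, t < i ∧ i ≤ t + d ∧ cl i = C then S h.choose else 0 with hφ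
  have hφS : ∀ i, t < i → i ≤ t + d → φ (cl i) = S i := by
    intro i hi hi'
    have h : ∃ j, t < j ∧ j ≤ t + d ∧ cl j = cl i := ⟨i, hi, hi', rfl⟩
    rw [hφ]
    simp only [dif_pos h]
    exact hconst _ _ h.choose_spec.1 h.choose_spec.2.1 hi hi' h.choose_spec.2.2
  have hper : ∀ k, φ (cl (k + d)) = φ (cl k) := fun k => by simp only [hcl, hx.periodic]
  set e := s(x (t + d), x (t + d + 1)) with he
  set g' : V → ZMod 2 := fun v => g v + φ ((offCycle G x).connectedComponentMk v) with hg'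
  refine hns e (hx.adj _) g' ?_
  have hcyc : ∀ i, t < i → i ≤ t + d →
      (edgeSign σ s(x i, x (i + 1)) = g' (x i) + g' (x (i + 1)) ↔ s(x i, x (i + 1)) ≠ e) := by
    intro i hi hi'
    have hsucc : S (i + 1) = S i + (edgeSign σ s(x i, x (i + 1)) + g (x i) + g (x (i + 1))) :=
      switchedSum_succ i
    have h1 : φ ((offCycle G x).connectedComponentMk (x i)) = S i := hφS i hi hi'
    have hdec : ∀ p q r s s' : ZMod 2, s' = s + (p + q + r) → (p = q + s + (r + s') ↔ True) := by
      decide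
    have hdec' : ∀ p q r s s' : ZMod 2, s' + 1 = s + (p + q + r) →
      (p = q + s + (r + s') ↔ False) := by decide
    simp only [hg', h1]
    rcases hi'.lt_or_eq with hlt | rfl
    · have h2 : φ ((offCycle G x).connectedComponentMk (x (i + 1))) = S (i + 1) :=
        hφS (i + 1) (by omega) (by omega)
      rw [h2, hdec _ _ _ _ _ hsucc, true_iff]
      intro heq
      have := hx.eq_of_edge_eq heq (by omega) (by omega)
      omega
    · have h2 : φ ((offCycle G x).connectedComponentMk (x (t + d + 1))) = S (t + 1) := by
        rw [← hφS (t + 1) (by omega) (by omega), ← hper (t + 1)]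
        simp only [hcl]
        rw [show t + 1 + d = t + d + 1 by omega]
      have h4 : S (t + 1) + 1 = S (t + d + 1) := by
        rw [show t + d + 1 = t + 1 + d by omega, hS]
      rw [h2, hdec' _ _ _ _ _ (h4.trans hsucc), false_iff, not_not]
  intro u v huv
  by_cases hH : (offCycle G x).Adj u v
  · have hcomp : (offCycle G x).connectedComponentMk u = (offCycle G x).connectedComponentMk v :=
      ConnectedComponent.sound hH.reachable
    refine iff_of_true ?_ ((offCycle_adj.1 hH).2 _)
    rw [hg _ _ hH, hg']
    simp only [hcomp]
    generalize φ ((offCycle G x).connectedComponentMk v) = p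
    generalize g u = q, g v = r
    revert p q r
    decide
  · obtain ⟨k, hk⟩ : ∃ k, s(u, v) = s(x k, x (k + 1)) := by
      by_contra! hne
      exact hH (offCycle_adj.2 ⟨huv, hne⟩)
    obtain ⟨i, hi, hi', h1, h2⟩ := hx.exists_mem_window t k
    rw [h1, h2] at hk
    have := hcyc i hi hi'
    rw [hk]
    rcases Sym2.eq_iff.1 hk with ⟨rfl, rfl⟩ | ⟨rfl, rfl⟩
    · exact this
    · rw [add_comm (g' _)]
      exact this

end PeriodicCycle

end GoodArcs

section CyclicIntervals

/-- The residues modulo `d` of the integers in `[a, b)`. -/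
noncomputable def cyclicInterval (d : ℕ) (a b : ℤ) : Finset (ZMod d) :=
  (Finset.Ico a b).image fun k : ℤ => (k : ZMod d)

variable {d : ℕ}

lemma mem_cyclicInterval {a b : ℤ} {t : ZMod d} :
    t ∈ cyclicInterval d a b ↔ ∃ k : ℤ, a ≤ k ∧ k < b ∧ (k : ZMod d) = t := by
  simp [cyclicInterval, and_assoc]

lemma cyclicInterval_add {a b m : ℤ} (hm : (m : ZMod d) = 0) :
    cyclicInterval d (a + m) (b + m) = cyclicInterval d a b := by
  ext t
  rw [mem_cyclicInterval, mem_cyclicInterval]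
  constructor
  · rintro ⟨k, h1, h2, h3⟩
    exact ⟨k - m, by omega, by omega, by push_cast; rw [hm, h3, sub_zero]⟩
  · rintro ⟨k, h1, h2, h3⟩
    exact ⟨k + m, by omega, by omega, by push_cast; rw [hm, h3, add_zero]⟩

lemma cyclicInterval_mono {a b a' b' : ℤ} (ha : a' ≤ a) (hb : b ≤ b') :
    cyclicInterval d a b ⊆ cyclicInterval d a' b' :=
  Finset.image_subset_image (Finset.Ico_subset_Ico ha hb)

lemma le_card_cyclicInterval {a b : ℤ} (h : b ≤ a + d) :
    b - a ≤ (cyclicInterval d a b).card := by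
  rw [cyclicInterval, Finset.card_image_of_injOn]
  · rw [Int.card_Ico]
    exact Int.self_le_toNat _
  · intro i hi j hj hij
    simp only [Finset.coe_Ico, Set.mem_Ico] at hi hj
    have hdvd := (ZMod.intCast_eq_intCast_iff_dvd_sub i j d).1 hij
    have := Int.eq_zero_of_abs_lt_dvd hdvd (by rw [abs_lt]; omega)
    omega

lemma exists_cyclicInterval_of_mem {a b : ℤ} {t : ZMod d} (h : t ∈ cyclicInterval d a b) (T : ℤ)
    (hT : (T : ZMod d) = t) :
    ∃ a' b', cyclicInterval d a' b' = cyclicInterval d a b ∧ a' ≤ T ∧ T < b' := by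
  obtain ⟨k, h1, h2, h3⟩ := mem_cyclicInterval.1 h
  exact ⟨a + (T - k), b + (T - k), cyclicInterval_add (by push_cast; rw [hT, h3, sub_self]),
    by omega, by omega⟩

lemma cyclicInterval_subset_union {a b : ℤ} {a' b' c c' T : ℤ}
    (hac : a ≤ c) (hcb : c' ≤ b') (hT : a' ≤ T) (hT' : T < b) :
    cyclicInterval d c c' ⊆ cyclicInterval d a b ∪ cyclicInterval d a' b' := by
  intro t ht
  obtain ⟨k, h1, h2, h3⟩ := mem_cyclicInterval.1 ht
  rw [Finset.mem_union, mem_cyclicInterval, mem_cyclicInterval]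
  by_cases hk : k < b
  · exact Or.inl ⟨k, by omega, hk, h3⟩
  · exact Or.inr ⟨k, by omega, by omega, h3⟩

/-- Of three cyclic intervals with a common point, one is contained in the union of the
other two. -/
lemma cyclicInterval_subset_union_of_mem {a₁ b₁ a₂ b₂ a₃ b₃ : ℤ} {t : ZMod d}
    (h₁ : t ∈ cyclicInterval d a₁ b₁) (h₂ : t ∈ cyclicInterval d a₂ b₂)
    (h₃ : t ∈ cyclicInterval d a₃ b₃) :
    cyclicInterval d a₁ b₁ ⊆ cyclicInterval d a₂ b₂ ∪ cyclicInterval d a₃ b₃ ∨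
      cyclicInterval d a₂ b₂ ⊆ cyclicInterval d a₁ b₁ ∪ cyclicInterval d a₃ b₃ ∨
      cyclicInterval d a₃ b₃ ⊆ cyclicInterval d a₁ b₁ ∪ cyclicInterval d a₂ b₂ := by
  obtain ⟨T, hT⟩ := ZMod.intCast_surjective t
  obtain ⟨p₁, q₁, e₁, l₁, u₁⟩ := exists_cyclicInterval_of_mem h₁ T hT
  obtain ⟨p₂, q₂, e₂, l₂, u₂⟩ := exists_cyclicInterval_of_mem h₂ T hT
  obtain ⟨p₃, q₃, e₃, l₃, u₃⟩ := exists_cyclicInterval_of_mem h₃ T hT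
  rw [← e₁, ← e₂, ← e₃]
  by_cases c₁ : (p₂ ≤ p₁ ∧ q₁ ≤ q₃) ∨ (p₃ ≤ p₁ ∧ q₁ ≤ q₂)
  · left
    rcases c₁ with ⟨c, c'⟩ | ⟨c, c'⟩
    · exact cyclicInterval_subset_union c c' l₃ u₂
    · rw [Finset.union_comm]
      exact cyclicInterval_subset_union c c' l₂ u₃
  by_cases c₂ : (p₁ ≤ p₂ ∧ q₂ ≤ q₃) ∨ (p₃ ≤ p₂ ∧ q₂ ≤ q₁)
  · right; left
    rcases c₂ with ⟨c, c'⟩ | ⟨c, c'⟩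
    · exact cyclicInterval_subset_union c c' l₃ u₁
    · rw [Finset.union_comm]
      exact cyclicInterval_subset_union c c' l₁ u₃
  by_cases c₃ : (p₁ ≤ p₃ ∧ q₃ ≤ q₂) ∨ (p₂ ≤ p₃ ∧ q₃ ≤ q₁)
  · right; right
    rcases c₃ with ⟨c, c'⟩ | ⟨c, c'⟩
    · exact cyclicInterval_subset_union c c' l₂ u₁
    · rw [Finset.union_comm]
      exact cyclicInterval_subset_union c c' l₁ u₂
  by_cases d₁ : p₁ ≤ p₂ ∧ q₂ ≤ q₁
  · right; left
    exact (cyclicInterval_mono d₁.1 d₁.2).trans Finset.subset_union_left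
  by_cases d₂ : p₁ ≤ p₃ ∧ q₃ ≤ q₁
  · right; right
    exact (cyclicInterval_mono d₂.1 d₂.2).trans Finset.subset_union_left
  by_cases d₃ : p₂ ≤ p₁ ∧ q₁ ≤ q₂
  · left
    exact (cyclicInterval_mono d₃.1 d₃.2).trans Finset.subset_union_left
  by_cases d₄ : p₂ ≤ p₃ ∧ q₃ ≤ q₂
  · right; right
    exact (cyclicInterval_mono d₄.1 d₄.2).trans Finset.subset_union_right
  by_cases d₅ : p₃ ≤ p₁ ∧ q₁ ≤ q₃
  · left
    exact (cyclicInterval_mono d₅.1 d₅.2).trans Finset.subset_union_right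
  by_cases d₆ : p₃ ≤ p₂ ∧ q₂ ≤ q₃
  · right; left
    exact (cyclicInterval_mono d₆.1 d₆.2).trans Finset.subset_union_right
  omega

/-- A cover of `ZMod d` by cyclic intervals contains a subcover whose total length is at most
`2 * d` minus the number of its members. -/
lemma exists_subcover_cyclicInterval [NeZero d] {ι : Type*} [DecidableEq ι] (J : Finset ι)
    (a b : ι → ℤ) (hd : ∀ i ∈ J, b i ≤ a i + d)
    (hcov : ∀ t, ∃ i ∈ J, t ∈ cyclicInterval d (a i) (b i)) :
    ∃ K ⊆ J, (∀ t, ∃ i ∈ K, t ∈ cyclicInterval d (a i) (b i)) ∧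
      ∑ i ∈ K, (b i - a i) + K.card ≤ 2 * d := by
  set R : ι → Finset (ZMod d) := fun i => cyclicInterval d (a i) (b i) with hR
  obtain ⟨K, hK⟩ := (J.powerset.filter fun K => ∀ t, ∃ i ∈ K, t ∈ R i).exists_minimal
    ⟨J, by simpa using hcov⟩
  have hKJ : K ⊆ J := by simpa using (Finset.mem_filter.1 hK.prop).1
  have hKcov : ∀ t, ∃ i ∈ K, t ∈ R i := (Finset.mem_filter.1 hK.prop).2
  have hmin : ∀ i ∈ K, ∃ t, ∀ j ∈ K, t ∈ R j → j = i := by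
    intro i hi
    by_contra! hcon
    have hmem : K.erase i ∈ J.powerset.filter fun K => ∀ t, ∃ i ∈ K, t ∈ R i := by
      refine Finset.mem_filter.2 ⟨Finset.mem_powerset.2 ((Finset.erase_subset _ _).trans hKJ), ?_⟩
      intro t
      obtain ⟨j, hj, hjt, hji⟩ := hcon t
      exact ⟨j, Finset.mem_erase.2 ⟨hji, hj⟩, hjt⟩
    exact Finset.notMem_erase i K (hK.le_of_le hmem (Finset.erase_subset _ _) hi)
  choose! f hf using hmin
  have hfmem : ∀ i ∈ K, f i ∈ R i := by
    intro i hi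
    obtain ⟨j, hj, hjt⟩ := hKcov (f i)
    rwa [hf i hi j hj hjt] at hjt
  have hfinj : Set.InjOn f K := fun i hi j hj hij =>
    hf j hj i hi (hij ▸ hfmem i hi)
  have hpoint : ∀ t, (K.filter fun i => t ∈ R i).card + (if t ∈ K.image f then 1 else 0) ≤ 2 := by
    intro t
    split_ifs with ht
    · obtain ⟨i, hi, rfl⟩ := Finset.mem_image.1 ht
      have : (K.filter fun j => f i ∈ R j) ⊆ {i} := fun j hj => by
        rw [Finset.mem_filter] at hj
        exact Finset.mem_singleton.2 (hf i hi j hj.1 hj.2)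
      have := Finset.card_le_card this
      rw [Finset.card_singleton] at this
      omega
    · rw [add_zero]
      by_contra! hcard
      obtain ⟨i, hi, j, hj, k, hk, hij, hik, hjk⟩ := Finset.two_lt_card.1 hcard
      rw [Finset.mem_filter] at hi hj hk
      have hcontra : ∀ p q r : ι, p ∈ K → q ∈ K → r ∈ K → p ≠ q → p ≠ r → ¬ R p ⊆ R q ∪ R r := by
        intro p q r hp hq hr hpq hpr hsub
        rcases Finset.mem_union.1 (hsub (hfmem p hp)) with h | h
        · exact hpq (hf p hp q hq h).symm
        · exact hpr (hf p hp r hr h).symm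
      rcases cyclicInterval_subset_union_of_mem hi.2 hj.2 hk.2 with h | h | h
      · exact hcontra i j k hi.1 hj.1 hk.1 hij hik h
      · exact hcontra j i k hj.1 hi.1 hk.1 hij.symm hjk h
      · exact hcontra k i j hk.1 hi.1 hj.1 hik.symm hjk.symm h
  have hsum := Finset.sum_le_sum fun t (_ : t ∈ (Finset.univ : Finset (ZMod d))) => hpoint t
  rw [Finset.sum_add_distrib, Finset.sum_const, Finset.card_univ, ZMod.card, ← Finset.sum_filter,
    Finset.sum_const, Finset.filter_mem_eq_inter, Finset.univ_inter,
    Finset.card_image_of_injOn hfinj] at hsum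
  have hdouble : ∑ t, (K.filter fun i => t ∈ R i).card = ∑ i ∈ K, (R i).card := by
    simp only [Finset.card_filter]
    rw [Finset.sum_comm]
    simp
  have hlen : ∑ i ∈ K, (b i - a i) ≤ ((∑ i ∈ K, (R i).card : ℕ) : ℤ) := by
    push_cast
    exact Finset.sum_le_sum fun i hi => le_card_cyclicInterval (hd i (hKJ hi))
  rw [hdouble] at hsum
  simp only [smul_eq_mul, mul_one] at hsum
  exact ⟨K, hKJ, hKcov, by omega⟩

end CyclicIntervals

section CycleBound

variable {V : Type*} {G : SimpleGraph V} {σ : Sym2 V → Bool} {g : V → ZMod 2} {x : ℕ → V} {d : ℕ}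

/-- In a set of integers of period `2 * d` without three points whose cyclic gaps are all less
than `d`, two overlapping or non-overlapping short arcs lie in a common short arc. -/
lemma exists_common_arc {Z : ℕ → Prop} (h2 : ∀ p, Z p → Z (p + 2 * d))
    (h1 : ∀ p, Z p → ¬ Z (p + d))
    (hnt : ∀ α β γ, Z α → Z β → Z γ → α < β → β < γ → β < α + d → γ < β + d → ¬ α + d < γ)
    {a b a' b' : ℕ} (ha : Z a) (hb : Z b) (ha' : Z a') (hb' : Z b') (hab : a < b)
    (hba : b < a + d) (hab' : a' < b') (hba' : b' < a' + d) (hle : a ≤ a') (hlt : a' < a + 2 * d) :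
    ∃ p q, Z p ∧ Z q ∧ p < q ∧ q < p + d ∧
      (p ≤ a ∧ b ≤ q ∨ p ≤ a + 2 * d ∧ b + 2 * d ≤ q) ∧ p ≤ a' ∧ b' ≤ q := by
  have hane : ∀ p q, Z p → Z q → q ≠ p + d := fun p q hp hq h => h1 p hp (h ▸ hq)
  have n1 := hane a b' ha hb'
  have n2 := hane a a' ha ha'
  have n3 := hane b a' hb ha'
  have t1 := hnt a b b' ha hb hb'
  have t2 := hnt a b a' ha hb ha'
  have t3 := hnt a a' b' ha ha' hb'
  by_cases c1 : a' ≤ b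
  · by_cases c2 : b' ≤ b
    · exact ⟨a, b, ha, hb, by omega⟩
    · exact ⟨a, b', ha, hb', by omega⟩
  · by_cases c2 : a' < a + d
    · exact ⟨a, b', ha, hb', by omega⟩
    · by_cases c3 : b' ≤ b + 2 * d
      · exact ⟨a', b + 2 * d, ha', h2 b hb, by omega⟩
      · exact ⟨a', b', ha', hb', by omega⟩

namespace PeriodicCycle

lemma apply_eq_of_natCast_eq (hx : PeriodicCycle G x d) {a b : ℕ} (h : (a : ZMod d) = b) :
    x a = x b := by
  have h' := (ZMod.natCast_eq_natCast_iff' a b d).1 h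
  rw [← Nat.mod_add_div a d, ← Nat.mod_add_div b d, mul_comm d, mul_comm d, hx.apply_add_mul,
    hx.apply_add_mul, h']

lemma edge_mem_arc (hx : PeriodicCycle G x d) {k a b : ℕ}
    (h : (k : ZMod d) ∈ cyclicInterval d a b) :
    s(x k, x (k + 1)) ∈ {e | ∃ k, a ≤ k ∧ k < b ∧ e = s(x k, x (k + 1))} := by
  obtain ⟨j, h1, h2, h3⟩ := mem_cyclicInterval.1 h
  lift j to ℕ using by omega
  rw [Int.cast_natCast] at h3
  have h4 : ((j + 1 : ℕ) : ZMod d) = ((k + 1 : ℕ) : ZMod d) := by push_cast; rw [h3]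
  exact ⟨j, by omega, by omega,
    by rw [hx.apply_eq_of_natCast_eq h3, hx.apply_eq_of_natCast_eq h4]⟩

lemma card_image_range [DecidableEq V] (hx : PeriodicCycle G x d) :
    ((Finset.range d).image x).card = d := by
  rw [Finset.card_image_of_injOn, Finset.card_range]
  intro i hi j hj hij
  simp only [Finset.coe_range, Set.mem_Iio] at hi hj
  exact hx.eq_of_apply_eq hij (by omega) (by omega)

lemma hasSignCover_of_triple [Fintype V] (hx : PeriodicCycle G x d) (hG : IsCubic G)
    (hS : ∀ k, switchedSum σ g x (k + d) = switchedSum σ g x k + 1)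
    (hg : ∀ u v, (offCycle G x).Adj u v → edgeSign σ s(u, v) = g u + g v) {α β γ : ℕ}
    (hαβ : GoodArc G σ g x d α β) (hβγ : GoodArc G σ g x d β γ) (hαγ : α + d < γ) :
    ∃ m, HasSignCover G σ {e | ∃ k, e = s(x k, x (k + 1))} m ∧
      3 * m ≤ 4 * Fintype.card V + 8 := by
  classical
  have h3 := hx.three_le
  obtain ⟨l1, l2, c1, s1⟩ := hαβ
  obtain ⟨l3, l4, c2, s2⟩ := hβγ
  obtain ⟨P, hP⟩ := (ConnectedComponent.exact c1).exists_isPath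
  obtain ⟨u, huP, R, hR, -, -, hRP⟩ := Walk.exists_path_to_set {v | v ∈ P.support}
    (ConnectedComponent.exact c2.symm).some P.end_mem_support
  have hcount : P.length + R.length + 1 + d ≤ Fintype.card V + 3 := by
    have hPc := card_support_toFinset_of_isPath hP
    have hRc := card_support_toFinset_of_isPath hR
    have hD := hx.card_image_range
    have hcap : (P.support.toFinset ∩ R.support.toFinset).card ≤ 1 := by
      refine Finset.card_le_one.2 fun y hy z hz => ?_
      simp only [Finset.mem_inter, List.mem_toFinset] at hy hz
      rw [hRP y hy.2 hy.1, hRP z hz.2 hz.1]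
    have hcap' : ((P.support.toFinset ∪ R.support.toFinset) ∩ (Finset.range d).image x).card
        ≤ 3 := by
      refine (Finset.card_le_card (t := {x α, x β, x γ}) fun y hy => ?_).trans Finset.card_le_three
      simp only [Finset.mem_inter, Finset.mem_union, List.mem_toFinset, Finset.mem_image] at hy
      obtain ⟨hy, k, -, rfl⟩ := hy
      have hPk : x k ∈ P.support → x k = x α ∨ x k = x β := hx.eq_end_of_mem_support hG hP
      simp only [Finset.mem_insert, Finset.mem_singleton]
      rcases hy with hy | hy
      · tauto
      · rcases hx.eq_end_of_mem_support hG hR hy with h | h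
        · tauto
        · have := hPk (by rw [h]; exact huP)
          tauto
    have e1 := Finset.card_union_add_card_inter P.support.toFinset R.support.toFinset
    have e2 := Finset.card_union_add_card_inter (P.support.toFinset ∪ R.support.toFinset)
      ((Finset.range d).image x)
    have e3 := Finset.card_le_univ
      (P.support.toFinset ∪ R.support.toFinset ∪ (Finset.range d).image x)
    omega
  have hlen := congrArg Walk.length (P.take_spec huP)
  rw [Walk.length_append] at hlen
  have hper : x α = x (α + 2 * d) := (hx.apply_add_mul α 2).symm
  have s3 : switchedSum σ g x γ = switchedSum σ g x (α + 2 * d) := by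
    rw [show α + 2 * d = α + d + d by omega, hS, hS, add_assoc, ← s2, ← s1,
      show (1 : ZMod 2) + 1 = 0 from rfl, add_zero]
  have A1 := hx.hasSignCover_arc hG hg l1 l2 s1 P
  have A2 := hx.hasSignCover_arc hG hg l3 l4 s2 ((P.dropUntil u huP).reverse.append R.reverse)
  have A3 := hx.hasSignCover_arc hG hg (a := γ) (b := α + 2 * d) (by omega) (by omega) s3
    ((R.append (P.takeUntil u huP).reverse).copy rfl hper)
  rw [Walk.length_append, Walk.length_reverse, Walk.length_reverse] at A2
  rw [Walk.length_copy, Walk.length_append, Walk.length_reverse] at A3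
  have hT : ∀ k, ∃ T, α ≤ T ∧ T < α + d ∧ s(x k, x (k + 1)) = s(x T, x (T + 1)) ∧
      s(x k, x (k + 1)) = s(x (T + d), x (T + d + 1)) := by
    intro k
    have hd : ∀ T, s(x T, x (T + 1)) = s(x (T + d), x (T + d + 1)) := fun T => by
      rw [hx.periodic, show T + d + 1 = T + 1 + d by omega, hx.periodic]
    obtain ⟨T, h1, h2, h3, h4⟩ := hx.exists_mem_window α k
    rcases h2.lt_or_eq with h | rfl
    · exact ⟨T, h1.le, h, by rw [h3, h4], by rw [h3, h4, hd]⟩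
    · exact ⟨α, le_rfl, by omega, by rw [h3, h4, ← hd], by rw [h3, h4]⟩
  have hpair : ∀ {a b a' b' m m' : ℕ},
      HasSignCover G σ {e | ∃ k, a ≤ k ∧ k < b ∧ e = s(x k, x (k + 1))} m →
      HasSignCover G σ {e | ∃ k, a' ≤ k ∧ k < b' ∧ e = s(x k, x (k + 1))} m' →
      (∀ T, α ≤ T → T < α + d → (a ≤ T ∧ T < b) ∨ (a' ≤ T ∧ T < b') ∨
        (a ≤ T + d ∧ T + d < b) ∨ (a' ≤ T + d ∧ T + d < b')) →
      HasSignCover G σ {e | ∃ k, e = s(x k, x (k + 1))} (m + m') := by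
    intro a b a' b' m m' h h' hcov
    refine (h.union h').mono ?_ le_rfl
    rintro e ⟨k, rfl⟩
    obtain ⟨T, h1, h2, h3, h4⟩ := hT k
    rcases hcov T h1 h2 with h | h | h | h
    · exact Or.inl ⟨T, h.1, h.2, h3⟩
    · exact Or.inr ⟨T, h.1, h.2, h3⟩
    · exact Or.inl ⟨T + d, h.1, h.2, h4⟩
    · exact Or.inr ⟨T + d, h.1, h.2, h4⟩
  have B1 := hpair A1 A2 (by omega)
  have B2 := hpair A2 A3 (by omega)
  have B3 := hpair A3 A1 (by omega)
  by_contra! hno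
  have D1 := hno _ B1
  have D2 := hno _ B2
  have D3 := hno _ B3
  omega

lemma goodArc_add_mul (hx : PeriodicCycle G x d)
    (hS : ∀ k, switchedSum σ g x (k + d) = switchedSum σ g x k + 1) {a b : ℕ}
    (h : GoodArc G σ g x d a b) (m : ℕ) : GoodArc G σ g x d (a + m * d) (b + m * d) := by
  induction m with
  | zero => simpa using h
  | succ m ih =>
    obtain ⟨h1, h2, h3, h4⟩ := ih
    rw [Nat.succ_mul, ← Nat.add_assoc, ← Nat.add_assoc]
    exact ⟨by omega, by omega, by rwa [hx.periodic, hx.periodic], by rw [hS, hS, h4]⟩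

lemma exists_common_goodArc (hx : PeriodicCycle G x d)
    (hS : ∀ k, switchedSum σ g x (k + d) = switchedSum σ g x k + 1)
    (hnt : ∀ α β γ, GoodArc G σ g x d α β → GoodArc G σ g x d β γ → ¬ α + d < γ)
    {a b a' b' : ℕ} (h : GoodArc G σ g x d a b) (h' : GoodArc G σ g x d a' b')
    (hc : (offCycle G x).connectedComponentMk (x a) =
      (offCycle G x).connectedComponentMk (x a')) :
    ∃ p q, GoodArc G σ g x d p q ∧ (offCycle G x).connectedComponentMk (x p) =
        (offCycle G x).connectedComponentMk (x a) ∧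
      cyclicInterval d a b ⊆ cyclicInterval d p q ∧
      cyclicInterval d a' b' ⊆ cyclicInterval d p q := by
  have h3 := hx.three_le
  have hres : ∀ a b m : ℕ, cyclicInterval d ((a + m * d : ℕ) : ℤ) ((b + m * d : ℕ) : ℤ) =
      cyclicInterval d a b := by
    intro a b m
    have := cyclicInterval_add (d := d) (a := a) (b := b) (m := (m * d : ℕ)) (by simp)
    rw [← this]
    push_cast
    rfl
  have hS2 : ∀ k m, switchedSum σ g x (k + m * d) = switchedSum σ g x k + m := by
    intro k m
    induction m with
    | zero => simp
    | succ m ih =>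
      rw [Nat.succ_mul, ← Nat.add_assoc, hS, ih]
      push_cast
      ring
  wlog hs : switchedSum σ g x a = switchedSum σ g x a' generalizing a' b'
  · have hsh := goodArc_add_mul hx hS h' 1
    obtain ⟨p, q, h4, h5, h6, h7⟩ := this hsh (by rw [hx.apply_add_mul]; exact hc) (by
      rw [hS2]
      revert hs
      generalize switchedSum σ g x a = y
      generalize switchedSum σ g x a' = z
      revert y z
      decide)
    exact ⟨p, q, h4, h5, h6, by rwa [hres] at h7⟩
  wlog hle : a ≤ a' generalizing a' b'
  · have hsh := goodArc_add_mul hx hS h' (2 * a)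
    obtain ⟨p, q, h4, h5, h6, h7⟩ := this hsh (by rw [hx.apply_add_mul]; exact hc) (by
      rw [hS2, hs]
      push_cast
      rw [show (2 : ZMod 2) = 0 from rfl, zero_mul, add_zero]) (by nlinarith)
    exact ⟨p, q, h4, h5, h6, by rwa [hres] at h7⟩
  wlog hlt : a' < a + 2 * d generalizing a b
  · set m := 2 * ((a' - a) / (2 * d)) with hm
    have hsh := goodArc_add_mul hx hS h m
    have hdiv := Nat.mod_add_div (a' - a) (2 * d)
    have hmod := Nat.mod_lt (a' - a) (show 0 < 2 * d by omega)
    have hmd : m * d = 2 * d * ((a' - a) / (2 * d)) := by rw [hm]; ring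
    obtain ⟨p, q, h4, h5, h6, h7⟩ := this hsh (by rw [hx.apply_add_mul]; exact hc) (by
      rw [hS2, ← hs, hm]
      push_cast
      rw [show (2 : ZMod 2) = 0 from rfl, zero_mul, add_zero]) (by omega) (by omega)
    rw [hx.apply_add_mul] at h5
    exact ⟨p, q, h4, h5, by rwa [hres] at h6, h7⟩
  set Z : ℕ → Prop := fun k => (offCycle G x).connectedComponentMk (x k) =
    (offCycle G x).connectedComponentMk (x a) ∧ switchedSum σ g x k = switchedSum σ g x a with hZ
  have hgood : ∀ p q, Z p → Z q → p < q → q < p + d → GoodArc G σ g x d p q :=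
    fun p q hp hq h1 h2 => ⟨h1, h2, hp.1.trans hq.1.symm, hp.2.trans hq.2.symm⟩
  obtain ⟨p, q, hp, hq, hpq, hqp, hab, hab'⟩ := exists_common_arc (Z := Z) (d := d) (a := a)
    (b := b) (a' := a') (b' := b')
    (fun p hp => by
      refine ⟨by rw [hx.apply_add_mul]; exact hp.1, ?_⟩
      rw [hS2, hp.2]
      push_cast
      rw [show (2 : ZMod 2) = 0 from rfl, add_zero])
    (fun p hp hp' => by
      have := hp'.2
      rw [hS, hp.2] at this
      simp at this)
    (fun α β γ hα hβ hγ h1 h2 h3 h4 =>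
      hnt α β γ (hgood _ _ hα hβ h1 h3) (hgood _ _ hβ hγ h2 h4))
    ⟨rfl, rfl⟩ ⟨h.comp_eq.symm, h.sum_eq.symm⟩ ⟨hc.symm, hs.symm⟩
    ⟨(hc.trans h'.comp_eq).symm, (hs.trans h'.sum_eq).symm⟩ h.lt h.lt_add h'.lt h'.lt_add hle hlt
  refine ⟨p, q, hgood p q hp hq hpq hqp, hp.1, ?_, ?_⟩
  · rcases hab with hab | hab
    · exact cyclicInterval_mono (by omega) (by omega)
    · rw [← hres a b 2]
      exact cyclicInterval_mono (by omega) (by omega)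
  · exact cyclicInterval_mono (by omega) (by omega)

end PeriodicCycle

end CycleBound

section CycleBoundMain

variable {V : Type*} {G : SimpleGraph V} {σ : Sym2 V → Bool} {g : V → ZMod 2} {x : ℕ → V} {d : ℕ}

namespace PeriodicCycle

lemma exists_greatest_goodArc (hx : PeriodicCycle G x d)
    (hS : ∀ k, switchedSum σ g x (k + d) = switchedSum σ g x k + 1)
    (hnt : ∀ α β γ, GoodArc G σ g x d α β → GoodArc G σ g x d β γ → ¬ α + d < γ)
    (C : (offCycle G x).ConnectedComponent)
    (hC : ∃ a b, GoodArc G σ g x d a b ∧ (offCycle G x).connectedComponentMk (x a) = C) :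
    ∃ a b, GoodArc G σ g x d a b ∧ (offCycle G x).connectedComponentMk (x a) = C ∧
      ∀ a' b', GoodArc G σ g x d a' b' → (offCycle G x).connectedComponentMk (x a') = C →
        cyclicInterval d a' b' ⊆ cyclicInterval d a b := by
  have : NeZero d := ⟨by have := hx.three_le; omega⟩
  obtain ⟨n, ⟨a, b, h, hc, hn⟩, hmin⟩ := Nat.lt_wfRel.wf.has_min
    {n | ∃ a b, GoodArc G σ g x d a b ∧ (offCycle G x).connectedComponentMk (x a) = C ∧
      n = d - (cyclicInterval d a b).card} (by
    obtain ⟨a, b, h, hc⟩ := hC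
    exact ⟨_, a, b, h, hc, rfl⟩)
  refine ⟨a, b, h, hc, fun a' b' h' hc' => ?_⟩
  obtain ⟨p, q, hpq, hcp, hsub, hsub'⟩ := hx.exists_common_goodArc hS hnt h h' (hc.trans hc'.symm)
  have hle : (cyclicInterval d p q).card ≤ (cyclicInterval d a b).card := by
    have h1 := hmin _ ⟨p, q, hpq, hcp.trans hc, rfl⟩
    have h2 := Finset.card_le_univ (cyclicInterval d p q)
    rw [ZMod.card] at h2
    have h3 : ¬ (d - (cyclicInterval d p q).card < n) := h1
    omega
  rwa [Finset.eq_of_subset_of_card_le hsub hle]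

lemma hasSignCover_of_no_triple [Fintype V] (hx : PeriodicCycle G x d) (hG : IsCubic G)
    (hS : ∀ k, switchedSum σ g x (k + d) = switchedSum σ g x k + 1)
    (hg : ∀ u v, (offCycle G x).Adj u v → edgeSign σ s(u, v) = g u + g v)
    (hns : NoSingleNegative G σ)
    (hnt : ∀ α β γ, GoodArc G σ g x d α β → GoodArc G σ g x d β γ → ¬ α + d < γ) :
    ∃ m, HasSignCover G σ {e | ∃ k, e = s(x k, x (k + 1))} m ∧ m ≤ Fintype.card V + d := by
  classical
  have h3 := hx.three_le
  have : NeZero d := ⟨by omega⟩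
  set H := offCycle G x with hH
  set J : Finset H.ConnectedComponent := Finset.univ.filter fun C =>
    ∃ a b, GoodArc G σ g x d a b ∧ H.connectedComponentMk (x a) = C with hJ
  have hgreat : ∀ C ∈ J, ∃ a b, GoodArc G σ g x d a b ∧ H.connectedComponentMk (x a) = C ∧
      ∀ a' b', GoodArc G σ g x d a' b' → H.connectedComponentMk (x a') = C →
        cyclicInterval d a' b' ⊆ cyclicInterval d a b := fun C hC =>
    hx.exists_greatest_goodArc hS hnt C (Finset.mem_filter.1 hC).2
  choose! a b hab hcomp hmax using hgreat
  obtain ⟨K, hKJ, hK, hsum⟩ := exists_subcover_cyclicInterval J (fun C => (a C : ℤ))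
    (fun C => (b C : ℤ)) (fun C hC => by have := (hab C hC).lt_add; show (b C : ℤ) ≤ a C + d; omega) (fun t => by
      obtain ⟨p, q, hpq, h1, h2⟩ := hx.exists_goodArc hS hg hns t.val
      have hCJ : H.connectedComponentMk (x p) ∈ J :=
        Finset.mem_filter.2 ⟨Finset.mem_univ _, p, q, hpq, rfl⟩
      refine ⟨_, hCJ, hmax _ hCJ p q hpq rfl (mem_cyclicInterval.2 ⟨(t.val + d : ℕ), ?_, ?_, ?_⟩)⟩
      · exact_mod_cast h1
      · exact_mod_cast h2
      · push_cast
        simp)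
  have hpath : ∀ C ∈ K, ∃ m, HasSignCover G σ
      {e | ∃ k, a C ≤ k ∧ k < b C ∧ e = s(x k, x (k + 1))} (b C - a C + m) ∧
      m ≤ 1 + (Finset.univ.filter fun v =>
        v ∉ (Finset.range d).image x ∧ H.connectedComponentMk v = C).card := by
    intro C hC
    have hgood := hab C (hKJ hC)
    obtain ⟨P, hP⟩ := (ConnectedComponent.exact hgood.comp_eq).exists_isPath
    refine ⟨P.length, hx.hasSignCover_arc hG hg hgood.lt hgood.lt_add hgood.sum_eq P, ?_⟩
    have hsub : P.support.toFinset ⊆ {x (a C), x (b C)} ∪ (Finset.univ.filter fun v =>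
        v ∉ (Finset.range d).image x ∧ H.connectedComponentMk v = C) := by
      intro v hv
      rw [List.mem_toFinset] at hv
      rw [Finset.mem_union, Finset.mem_filter]
      by_cases hvx : v ∈ (Finset.range d).image x
      · left
        obtain ⟨k, -, rfl⟩ := Finset.mem_image.1 hvx
        simpa using hx.eq_end_of_mem_support hG hP hv
      · right
        refine ⟨Finset.mem_univ _, hvx, ?_⟩
        rw [← hcomp C (hKJ hC)]
        exact (ConnectedComponent.sound ⟨P.takeUntil v hv⟩).symm
    have h1 := (Finset.card_le_card hsub).trans (Finset.card_union_le _ _)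
    rw [card_support_toFinset_of_isPath hP] at h1
    have h2 := Finset.card_le_two (a := x (a C)) (b := x (b C))
    omega
  choose! m hm hmle using hpath
  refine ⟨_, (HasSignCover.biUnion K _ _ hm).mono ?_ le_rfl, ?_⟩
  · rintro e ⟨k, rfl⟩
    obtain ⟨C, hC, hk⟩ := hK (k : ZMod d)
    exact Set.mem_biUnion hC (hx.edge_mem_arc hk)
  · have hfib : ∑ C ∈ K, (Finset.univ.filter fun v =>
        v ∉ (Finset.range d).image x ∧ H.connectedComponentMk v = C).card + d
        ≤ Fintype.card V := by
      have h1 : ∑ C ∈ K, (Finset.univ.filter fun v =>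
          v ∉ (Finset.range d).image x ∧ H.connectedComponentMk v = C).card
          ≤ ((Finset.range d).image x)ᶜ.card := by
        rw [← Finset.card_biUnion]
        · refine Finset.card_le_card fun v hv => ?_
          simp only [Finset.mem_biUnion, Finset.mem_filter] at hv
          obtain ⟨C, -, -, hv, -⟩ := hv
          exact Finset.mem_compl.2 hv
        · intro C _ C' _ hne
          refine Finset.disjoint_left.2 fun v hv hv' => hne ?_
          rw [← (Finset.mem_filter.1 hv).2.2, ← (Finset.mem_filter.1 hv').2.2]
      rw [Finset.card_compl, hx.card_image_range] at h1
      have h2 := Finset.card_le_univ ((Finset.range d).image x)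
      rw [hx.card_image_range] at h2
      omega
    have hlen : ((∑ C ∈ K, (b C - a C) : ℕ) : ℤ) = ∑ C ∈ K, ((b C : ℤ) - a C) := by
      push_cast
      refine Finset.sum_congr rfl fun C hC => ?_
      have := (hab C (hKJ hC)).lt
      omega
    have hmsum := Finset.sum_le_sum hmle
    rw [Finset.sum_add_distrib, Finset.sum_const, smul_eq_mul, mul_one] at hmsum
    rw [Finset.sum_add_distrib]
    omega

end PeriodicCycle

/-- In a cubic graph none of whose switchings has exactly one negative edge, every unbalanced
cycle is covered by sign-circuits of small total length. -/
lemma SimpleGraph.Walk.IsCycle.exists_hasSignCover [Fintype V] (hG : IsCubic G)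
    (hconn : G.Connected) (hns : NoSingleNegative G σ) {r : V} {p : G.Walk r r} (hp : p.IsCycle)
    (hsign : walkSign σ p = 1) : ∃ m, HasSignCover G σ {e | e ∈ p.edges} m ∧
      3 * m ≤ 4 * Fintype.card V + 3 * p.length := by
  classical
  have h3 := hp.three_le_length
  by_cases hdisj : ∃ s, ∃ q : G.Walk s s, q.IsCycle ∧ walkSign σ q = 1 ∧
      ∀ z ∈ p.support, z ∉ q.support
  · obtain ⟨s, q, hq, hqs, hd⟩ := hdisj
    refine ⟨_, (HasSignCover.of_disjoint_unbalanced hp hq hsign hqs hd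
      (hconn.preconnected r s).some p.start_mem_support q.start_mem_support).mono
      Set.subset_union_left (min_le_right _ _), ?_⟩
    omega
  obtain ⟨x, hx, hedges⟩ := hp.exists_periodicCycle
  have hbal : ∀ s, ∀ q : (offCycle G x).Walk s s, q.IsCycle → walkSign σ q = 0 := by
    intro s q hq
    by_contra hne
    refine hdisj ⟨s, q.mapLe (offCycle_le x), (Walk.isCycle_mapLe _).2 hq, ?_, ?_⟩
    · rw [walkSign, Walk.edges_mapLe_eq_edges]
      exact (zmod_two_eq_zero_or_one _).resolve_left hne
    · intro z hz hz'
      obtain ⟨e, he, hze⟩ := (Walk.mem_support_iff_exists_mem_edges_of_not_nil hp.not_nil).1 hz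
      rw [hedges, List.mem_map] at he
      obtain ⟨k, -, rfl⟩ := he
      rw [Walk.support_mapLe_eq_support] at hz'
      rcases Sym2.mem_iff.1 hze with rfl | rfl
      exacts [hx.notMem_support_of_isCycle hG hq _ hz', hx.notMem_support_of_isCycle hG hq _ hz']
  obtain ⟨g, hg⟩ := exists_potential hbal
  have hS : ∀ k, switchedSum σ g x (k + p.length) = switchedSum σ g x k + 1 :=
    hx.switchedSum_add (by rw [← hedges]; exact hsign)
  have hE : {e | e ∈ p.edges} ⊆ {e | ∃ k, e = s(x k, x (k + 1))} := by
    intro e he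
    rw [Set.mem_ofPred_eq, hedges, List.mem_map] at he
    obtain ⟨k, -, rfl⟩ := he
    exact ⟨k, rfl⟩
  by_cases ht : ∃ α β γ, GoodArc G σ g x p.length α β ∧ GoodArc G σ g x p.length β γ ∧
      α + p.length < γ
  · obtain ⟨α, β, γ, h1, h2, h4⟩ := ht
    obtain ⟨m, hm, hle⟩ := hx.hasSignCover_of_triple hG hS hg h1 h2 h4
    exact ⟨m, hm.mono hE le_rfl, by omega⟩
  · push Not at ht
    obtain ⟨m, hm, hle⟩ := hx.hasSignCover_of_no_triple hG hS hg hns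
      fun α β γ h1 h2 => not_lt.2 (ht α β γ h1 h2)
    exact ⟨m, hm.mono hE le_rfl, by omega⟩

end CycleBoundMain

section SingleNegative

variable {V : Type*} {G : SimpleGraph V} {σ : Sym2 V → Bool}

lemma IsCircuit.negCount_eq_of_switch [Fintype V] {C : G.Subgraph} (hC : IsCircuit G C)
    {e : Sym2 V} {g : V → ZMod 2}
    (h : ∀ u v, C.Adj u v → (edgeSign σ s(u, v) = g u + g v ↔ s(u, v) ≠ e)) :
    (negCount σ C.edgeSet : ZMod 2) = {f | f ∈ C.edgeSet ∧ f = e}.ncard := by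
  classical
  set T := C.spanningCoe with hT
  have hTe : C.edgeSet = (T.edgeFinset : Set (Sym2 V)) := by
    rw [SimpleGraph.coe_edgeFinset, hT, Subgraph.edgeSet_spanningCoe]
  have hneg : C.edgeSet ∩ {f | σ f = true} = (T.edgeFinset.filter fun f => σ f = true : Finset _) := by
    rw [hTe]; ext f; simp
  have hone : {f | f ∈ C.edgeSet ∧ f = e} = (T.edgeFinset.filter fun f => f = e : Finset _) := by
    rw [hTe]; ext f; simp
  have hdeg : ∀ v, ((T.degree v : ℕ) : ZMod 2) = 0 := by
    intro v
    rw [← T.card_neighborSet_eq_degree, ← Nat.card_eq_fintype_card, Nat.card_coe_set_eq]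
    have hn : T.neighborSet v = C.neighborSet v := by ext w; simp [hT]
    rw [hn]
    by_cases hv : v ∈ C.verts
    · rw [hC.2 v hv]; rfl
    · have : C.neighborSet v = ∅ := by
        ext w
        simp only [Subgraph.mem_neighborSet, Set.mem_empty_iff_false, iff_false]
        exact fun h => hv h.fst_mem
      rw [this]; simp
  have hterm : ∀ f ∈ T.edgeFinset, (if σ f = true then 1 else 0 : ZMod 2) =
      (∑ v, if v ∈ f then g v else 0) + if f = e then 1 else 0 := by
    intro f hf
    induction f with
    | _ u w =>
      have huw : C.Adj u w := by simpa [hT] using hf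
      have hsum : (∑ v, if v ∈ s(u, w) then g v else 0) = g u + g w := by
        rw [← Finset.sum_filter]
        have : (Finset.univ.filter fun v => v ∈ s(u, w)) = {u, w} := by
          ext v; simp
        rw [this, Finset.sum_pair huw.ne]
      rw [hsum]
      have := h u w huw
      change edgeSign σ s(u, w) = _
      by_cases he : s(u, w) = e
      · rw [if_pos he]
        have hne : edgeSign σ s(u, w) ≠ g u + g w := fun h' => this.1 h' he
        revert hne
        generalize edgeSign σ s(u, w) = a
        generalize g u + g w = b
        revert a b; decide
      · rw [if_neg he, this.2 he, add_zero]
  rw [negCount, hneg, hone, Set.ncard_coe_finset, Set.ncard_coe_finset, Finset.card_filter,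
    Finset.card_filter]
  push_cast
  rw [Finset.sum_congr rfl hterm, Finset.sum_add_distrib, Finset.sum_comm, add_eq_right]
  refine Finset.sum_eq_zero fun v _ => ?_
  rw [← Finset.sum_filter, ← incidenceFinset_eq_filter, Finset.sum_const,
    card_incidenceFinset_eq_degree, nsmul_eq_mul, hdeg, zero_mul]

lemma IsCircuit.odd_negCount_iff_of_switch [Fintype V] {C : G.Subgraph} (hC : IsCircuit G C)
    {e : Sym2 V} {g : V → ZMod 2}
    (h : ∀ u v, C.Adj u v → (edgeSign σ s(u, v) = g u + g v ↔ s(u, v) ≠ e)) :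
    Odd (negCount σ C.edgeSet) ↔ e ∈ C.edgeSet := by
  rw [← ZMod.natCast_eq_one_iff_odd, hC.negCount_eq_of_switch h]
  by_cases he : e ∈ C.edgeSet
  · have : {f | f ∈ C.edgeSet ∧ f = e} = {e} := by
      ext f; simp only [Set.mem_ofPred_eq, Set.mem_singleton_iff]
      exact ⟨fun h => h.2, fun h => ⟨h ▸ he, h⟩⟩
    simp [this, he]
  · have : {f | f ∈ C.edgeSet ∧ f = e} = ∅ := by
      ext f; simp only [Set.mem_ofPred_eq, Set.mem_empty_iff_false, iff_false]
      exact fun h => he (h.2 ▸ h.1)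
    simp [this, he]

lemma SimpleGraph.Subgraph.Connected.reachable_of_mem {H : G.Subgraph} (hH : H.Connected)
    {y z : V} (hy : y ∈ H.verts) (hz : z ∈ H.verts) : G.Reachable y z :=
  (hH.coe.preconnected ⟨y, hy⟩ ⟨z, hz⟩).map H.hom

lemma IsSignCircuit.reachable_of_mem {H : G.Subgraph} (hH : IsSignCircuit G σ H)
    {y z : V} (hy : y ∈ H.verts) (hz : z ∈ H.verts) : G.Reachable y z := by
  classical
  rcases hH with hH | ⟨C₁, C₂, P, u, v, h1, h2, ⟨w, -, hPv, -⟩, hu, hv, -, -, -, -, rfl⟩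
  · exact hH.1.1.reachable_of_mem hy hz
  · have key : ∀ x ∈ (C₁ ⊔ C₂ ⊔ P).verts, G.Reachable u x := by
      intro x hx
      rw [Subgraph.verts_sup, Subgraph.verts_sup] at hx
      rcases hx with (hx | hx) | hx
      · exact h1.1.1.reachable_of_mem hu hx
      · exact w.reachable.trans (h2.1.1.reachable_of_mem hv hx)
      · rw [hPv] at hx
        exact (w.takeUntil x hx).reachable
    exact (key y hy).symm.trans (key z hz)

/-- A flow-admissible signed graph has no component equivalent, up to switching, to one with
a single negative edge. -/
lemma FlowAdmissible.noSingleNegative_toSimpleGraph [Fintype V] (hfa : FlowAdmissible G σ)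
    (K : G.ConnectedComponent) :
    NoSingleNegative K.toSimpleGraph (fun e => σ (e.map (↑))) := by
  classical
  intro e he g hg
  set g' : V → ZMod 2 := fun v => if hv : v ∈ K then g ⟨v, hv⟩ else 0 with hg'
  have key : ∀ u v, u ∈ K → v ∈ K → G.Adj u v →
      (edgeSign σ s(u, v) = g' u + g' v ↔ s(u, v) ≠ e.map (↑)) := by
    intro u v hu hv huv
    have := hg ⟨u, hu⟩ ⟨v, hv⟩ ((K.toSimpleGraph_adj hu hv).2 huv)
    have e1 : g' u = g ⟨u, hu⟩ := dif_pos hu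
    have e2 : g' v = g ⟨v, hv⟩ := dif_pos hv
    rw [e1, e2]
    refine Iff.trans this (not_congr ⟨fun h => by rw [← h]; rfl, fun h => ?_⟩)
    exact Sym2.map.injective Subtype.val_injective (by rw [← h]; rfl)
  have heG : e.map (↑) ∈ G.edgeSet := by
    induction e with
    | _ a b => exact (K.toSimpleGraph_adj a.2 b.2).1 he
  obtain ⟨H, hH, heH⟩ := hfa _ heG
  have hverts : ∀ v ∈ H.verts, v ∈ K := by
    intro v hv
    induction e with
    | _ a b =>
      have ha : (a : V) ∈ H.verts := (Subgraph.mem_edgeSet.1 heH).fst_mem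
      have := ConnectedComponent.sound (hH.reachable_of_mem hv ha)
      exact this.trans a.2
  have hsub : ∀ C : G.Subgraph, C ≤ H → ∀ u v, C.Adj u v →
      (edgeSign σ s(u, v) = g' u + g' v ↔ s(u, v) ≠ e.map (↑)) := fun C hC u v huv =>
    key u v (hverts u (hC.1 huv.fst_mem)) (hverts v (hC.1 huv.snd_mem)) huv.adj_sub
  rcases hH with hH | ⟨C₁, C₂, P, u, v, h1, h2, -, -, -, -, -, -, hdis, rfl⟩
  · exact Nat.not_even_iff_odd.2 ((hH.1.odd_negCount_iff_of_switch (hsub H le_rfl)).2 heH) hH.2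
  · have m1 := (h1.1.odd_negCount_iff_of_switch (hsub C₁ (le_sup_left.trans le_sup_left))).1 h1.2
    have m2 := (h2.1.odd_negCount_iff_of_switch (hsub C₂ (le_sup_right.trans le_sup_left))).1 h2.2
    exact Set.eq_empty_iff_forall_notMem.1 hdis _ ⟨m1, m2⟩

end SingleNegative

section Embeddings

variable {V W : Type*} {G : SimpleGraph V} {G' : SimpleGraph W} {σ : Sym2 V → Bool}

lemma IsCircuit.map (f : G' ↪g G) {C : G'.Subgraph} (hC : IsCircuit G' C) :
    IsCircuit G (C.map f.toHom) := by
  constructor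
  · let φ : C.coe →g (C.map f.toHom).coe :=
      ⟨fun x => ⟨f x, Set.mem_image_of_mem _ x.2⟩, fun {a b} h => ⟨_, _, h, rfl, rfl⟩⟩
    refine ⟨Connected.map φ ?_ hC.1.coe⟩
    rintro ⟨_, x, hx, rfl⟩
    exact ⟨⟨x, hx⟩, rfl⟩
  · rintro _ ⟨x, hx, rfl⟩
    have : (C.map f.toHom).neighborSet (f x) = f '' C.neighborSet x := by
      ext w
      constructor
      · rintro ⟨a, b, hab, ha, rfl⟩
        obtain rfl := f.injective ha
        exact ⟨b, hab, rfl⟩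
      · rintro ⟨b, hb, rfl⟩
        exact ⟨x, b, hb, rfl, rfl⟩
    change ((C.map f.toHom).neighborSet (f x)).ncard = 2
    rw [this, Set.ncard_image_of_injective _ f.injective, hC.2 x hx]

lemma negCount_image_map {f : W → V} (hf : Function.Injective f) (E : Set (Sym2 W)) :
    negCount σ (Sym2.map f '' E) = negCount (fun e => σ (e.map f)) E := by
  rw [negCount, negCount, ← Set.ncard_image_of_injective _ (Sym2.map.injective hf)]
  congr 1
  ext e
  constructor
  · rintro ⟨⟨e, he, rfl⟩, h⟩
    exact ⟨e, ⟨he, h⟩, rfl⟩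
  · rintro ⟨e, ⟨he, h⟩, rfl⟩
    exact ⟨⟨e, he, rfl⟩, h⟩

lemma IsUnbalancedCircuit.map (f : G' ↪g G) {C : G'.Subgraph}
    (hC : IsUnbalancedCircuit G' (fun e => σ (e.map f)) C) :
    IsUnbalancedCircuit G σ (C.map f.toHom) := by
  refine ⟨hC.1.map f, ?_⟩
  rw [Subgraph.edgeSet_map]
  exact (negCount_image_map f.injective C.edgeSet) ▸ hC.2

lemma IsPathSubgraph.map (f : G' ↪g G) {P : G'.Subgraph} {u v : W}
    (hP : IsPathSubgraph G' P u v) : IsPathSubgraph G (P.map f.toHom) (f u) (f v) := by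
  obtain ⟨w, hw, hv, he⟩ := hP
  refine ⟨w.map f.toHom, hw.map f.injective, ?_, ?_⟩
  · ext x; simp [hv]
  · rw [Subgraph.edgeSet_map, he]; ext x; simp

lemma IsSignCircuit.map (f : G' ↪g G) {H : G'.Subgraph}
    (hH : IsSignCircuit G' (fun e => σ (e.map f)) H) : IsSignCircuit G σ (H.map f.toHom) := by
  rcases hH with hH | ⟨C₁, C₂, P, u, v, h1, h2, hP, hu, hv, hPu, hPv, hd, hde, rfl⟩
  · refine Or.inl ⟨hH.1.map f, ?_⟩
    rw [Subgraph.edgeSet_map]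
    exact (negCount_image_map f.injective H.edgeSet) ▸ hH.2
  · have hi : Function.Injective f.toHom := f.injective
    refine Or.inr ⟨C₁.map f.toHom, C₂.map f.toHom, P.map f.toHom, f u, f v, h1.map f, h2.map f,
      hP.map f, Set.mem_image_of_mem _ hu, Set.mem_image_of_mem _ hv, ?_, ?_, ?_, ?_, ?_⟩
    · rw [Subgraph.map_verts, Subgraph.map_verts, ← Set.image_inter hi, hPu, Set.image_singleton]
      rfl
    · rw [Subgraph.map_verts, Subgraph.map_verts, ← Set.image_inter hi, hPv, Set.image_singleton]
      rfl
    · rw [Subgraph.map_verts, Subgraph.map_verts, ← Set.image_inter hi]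
      refine (Set.image_mono hd).trans ?_
      rw [Set.image_inter hi, Set.image_singleton, Set.image_singleton]
      rfl
    · rw [Subgraph.edgeSet_map, Subgraph.edgeSet_map,
        ← Set.image_inter (Sym2.map.injective hi), hde, Set.image_empty]
    · rw [Subgraph.map_sup, Subgraph.map_sup]

lemma HasSignCover.map (f : G' ↪g G) {S : Set (Sym2 W)} {m : ℕ}
    (h : HasSignCover G' (fun e => σ (e.map f)) S m) :
    HasSignCover G σ (Sym2.map f '' S) m := by
  obtain ⟨𝓕, hF, hcov, hlen⟩ := h
  refine ⟨𝓕.map fun H => H.map f.toHom, ?_, ?_, ?_⟩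
  · intro H hH
    obtain ⟨H', hH', rfl⟩ := Multiset.mem_map.1 hH
    exact (hF H' hH').map f
  · rintro _ ⟨e, he, rfl⟩
    obtain ⟨H, hH, heH⟩ := hcov e he
    refine ⟨H.map f.toHom, Multiset.mem_map_of_mem _ hH, ?_⟩
    rw [Subgraph.edgeSet_map]
    exact ⟨e, heH, rfl⟩
  · refine le_trans (le_of_eq ?_) hlen
    rw [coverLength, coverLength, Multiset.map_map]
    congr 1
    refine Multiset.map_congr rfl fun H _ => ?_
    rw [Function.comp_apply, Subgraph.edgeSet_map]
    exact Set.ncard_image_of_injective _ (Sym2.map.injective f.injective)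

end Embeddings

section Components

variable {V : Type*} {G : SimpleGraph V} {σ : Sym2 V → Bool}

lemma IsCubic.toSimpleGraph (hG : IsCubic G) (K : G.ConnectedComponent) :
    IsCubic K.toSimpleGraph := by
  intro v
  rw [← hG v, ← Set.ncard_image_of_injective _ Subtype.val_injective]
  congr 1
  ext w
  constructor
  · rintro ⟨w, hw, rfl⟩
    exact hw
  · intro hw
    have hwK : w ∈ K := (ConnectedComponent.sound (Adj.reachable hw.symm)).trans v.2
    exact ⟨⟨w, hwK⟩, hw, rfl⟩

lemma Proper3EdgeColoring.comap {W : Type*} {G' : SimpleGraph W} {c : Sym2 V → Fin 3}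
    (hc : Proper3EdgeColoring G c) (f : G' ↪g G) :
    Proper3EdgeColoring G' (fun e => c (e.map f)) := by
  intro e he e' he' hne ⟨x, hx, hx'⟩
  exact hc _ (f.toHom.map_mem_edgeSet he) _ (f.toHom.map_mem_edgeSet he')
    (fun h => hne (Sym2.map.injective f.injective h))
    ⟨f x, Sym2.mem_map.2 ⟨x, hx, rfl⟩, Sym2.mem_map.2 ⟨x, hx', rfl⟩⟩

lemma Proper3EdgeColoring.hasSignCover [Fintype V] {c : Sym2 V → Fin 3}
    (hc : Proper3EdgeColoring G c) (hG : IsCubic G) (hfa : FlowAdmissible G σ) :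
    ∃ m, HasSignCover G σ G.edgeSet m ∧ 3 * m ≤ 10 * Fintype.card V := by
  classical
  have hK : ∀ K : G.ConnectedComponent, ∃ m,
      HasSignCover G σ (Sym2.map (↑) '' K.toSimpleGraph.edgeSet) m ∧
        3 * m ≤ 10 * Fintype.card K := by
    intro K
    let f : K.toSimpleGraph ↪g G := Embedding.induce K.supp
    obtain ⟨m, hm, hle⟩ := (hc.comap f).hasSignCover_of_cycle_bound
      (σ := fun e => σ (e.map f)) (hG.toSimpleGraph K) K.connected_toSimpleGraph
      fun r p hp hsign => hp.exists_hasSignCover (hG.toSimpleGraph K) K.connected_toSimpleGraph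
        (hfa.noSingleNegative_toSimpleGraph K) hsign
    exact ⟨m, hm.map f, hle⟩
  choose m hm hle using hK
  refine ⟨∑ K, m K, (HasSignCover.biUnion Finset.univ _ m fun K _ => hm K).mono ?_ le_rfl, ?_⟩
  · intro e he
    induction e with
    | _ u v =>
      simp only [Finset.mem_univ, Set.iUnion_true, Set.mem_iUnion]
      refine ⟨G.connectedComponentMk u, s(⟨u, rfl⟩, ⟨v, ?_⟩), he, rfl⟩
      exact ConnectedComponent.sound (Adj.reachable (G.adj_symm he))
  · rw [Finset.mul_sum]
    refine (Finset.sum_le_sum fun K _ => hle K).trans ?_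
    rw [← Finset.mul_sum]
    refine Nat.mul_le_mul_left _ (le_of_eq ?_)
    rw [← Fintype.card_sigma]
    exact Fintype.card_congr (Equiv.sigmaFiberEquiv G.connectedComponentMk)

end Components

/-- Main theorem. Every flow-admissible 3-edge-colorable cubic
signed graph has a sign-circuit cover of length at most `(20/9)|E(G)|`. -/
theorem stmt4 {V : Type*} [Fintype V] (G : SimpleGraph V) (σ : Sym2 V → Bool)
    (hfa : FlowAdmissible G σ) (hcubic : IsCubic G)
    (h3 : ThreeEdgeColorable G) :
    ∃ 𝓕 : Multiset G.Subgraph, (∀ H ∈ 𝓕, IsSignCircuit G σ H) ∧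
      Covers G 𝓕 G.edgeSet ∧
      9 * coverLength G 𝓕 ≤ 20 * G.edgeSet.ncard := by
  obtain ⟨c, hc⟩ := h3
  obtain ⟨m, ⟨𝓕, hF, hcov, hlen⟩, hm⟩ := hc.hasSignCover hcubic hfa
  have := card_edgeSet_of_isCubic hcubic
  exact ⟨𝓕, hF, hcov, by omega⟩
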